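/- arXiv:1212.1346 — 2 statements merged into one kernel-verified Lean document; each statement's English description precedes it below -/
import Mathlib

section
/- For every m ≥ 1 there exists a polynomial p such that for every n ≥ 1 and every nondeterministic finite automaton with n states over an alphabet Σ of m letters whose accepted language contains no unary word, there exists a deterministic finite automaton over Σ with at most p(n) states that is Parikh equivalent to it. -/
/-- The Parikh map `ψ : (Fin m)^* → ℕ^m`, counting for each letter its number of
occurrences in the word. -/
def parikh {m : ℕ} (w : List (Fin m)) : Fin m → ℕ := fun i => w.count i

/-- The Parikh image `ψ(L)` of a language over the alphabet `Fin m`. -/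
def parikhImage {m : ℕ} (L : Language (Fin m)) : Set (Fin m → ℕ) :=
  parikh '' L

/-- A word is unary if all of its letters are equal to one single letter
(the empty word is unary). -/
def IsUnaryWord {α : Type*} (w : List α) : Prop :=
  ∀ c ∈ w, ∀ c' ∈ w, c = c'

/-!
Cutting cycles out of an accepting run writes every vector of the Parikh image as a small offset
plus Parikh images of short cycles through the states visited. By Hall's theorem, all but boundedly
many of these cycles can be chosen from a set of vectors each of which owns a letter occurring in
it. So the Parikh image is a union of linear sets with polynomially bounded offsets and at most
`m` polynomially bounded periods, each indexed by one of its letters.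

Such a linear set has a small DFA, since the first letter of a word representing a period can be
chosen to identify the period. But there are polynomially many linear sets in the union, too many
for a product construction. If all offsets are large at a letter `a` and nonzero at another letter
`b`, then a DFA can instead read the prefix `a ^ i b` to learn which linear set the rest of the word
belongs to; the existence of `b` is where nonunarity enters. The offsets become large at some letter
once every period has been added often enough, and the vectors in which some period is used only a
few times lie in linear sets with fewer periods, which an induction on their number covers. Each
step of the induction takes the product of only `1 + m (m - 1)` automata, one for the latter vectors
and one for each pair `(a, b)`.
-/

namespace ParikhDFA

section Parikh

variable {m : ℕ}

lemma parikh_nil : parikh ([] : List (Fin m)) = 0 :=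
  funext fun _ => List.count_nil

lemma parikh_append (v w : List (Fin m)) : parikh (v ++ w) = parikh v + parikh w :=
  funext fun _ => List.count_append

lemma parikh_cons (c : Fin m) (w : List (Fin m)) :
    parikh (c :: w) = Pi.single c 1 + parikh w := by
  funext i
  simp [parikh, List.count_cons, Pi.single_apply, add_comm, @eq_comm _ c]

lemma parikh_replicate (k : ℕ) (c : Fin m) : parikh (List.replicate k c) = Pi.single c k := by
  funext i
  simp [parikh, List.count_replicate, Pi.single_apply, @eq_comm _ c]

lemma parikh_le_length (w : List (Fin m)) (i : Fin m) : parikh w i ≤ w.length :=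
  List.count_le_length

lemma parikh_apply_ne_zero {w : List (Fin m)} {i : Fin m} : parikh w i ≠ 0 ↔ i ∈ w :=
  Nat.pos_iff_ne_zero.symm.trans List.count_pos_iff

lemma exists_ne_parikh_ne_zero {w : List (Fin m)} (hw : ¬ IsUnaryWord w) :
    ∃ a b, a ≠ b ∧ parikh w a ≠ 0 ∧ parikh w b ≠ 0 := by
  simp only [IsUnaryWord, not_forall] at hw
  obtain ⟨a, ha, b, hb, hab⟩ := hw
  exact ⟨a, b, hab, parikh_apply_ne_zero.2 ha, parikh_apply_ne_zero.2 hb⟩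

lemma parikh_surjective : Function.Surjective (parikh (m := m)) := by
  intro v
  refine ⟨(∑ i, Multiset.replicate (v i) i).toList, funext fun j => ?_⟩
  rw [parikh, ← Multiset.coe_count, Multiset.coe_toList, Multiset.count_sum']
  simp [Multiset.count_replicate]

end Parikh

section Paths

variable {α σ : Type*} {A : NFA α σ}

/-- Concatenation of paths of an NFA. -/
def appendPath {p r q : σ} {u v : List α} : A.Path p r u → A.Path r q v → A.Path p q (u ++ v)
  | .nil _, Q => Q
  | .cons t _ _ a _ ht P, Q => .cons t _ _ a _ ht (appendPath P Q)

lemma exists_paths_of_append {p q : σ} {u v : List α} (P : A.Path p q (u ++ v)) :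
    ∃ r, Nonempty (A.Path p r u) ∧ Nonempty (A.Path r q v) := by
  simpa [← NFA.mem_evalFrom_iff_nonempty_path, NFA.evalFrom_append,
    NFA.mem_evalFrom_iff_exists (S := A.evalFrom {p} u)] using
      NFA.mem_evalFrom_iff_nonempty_path.2 ⟨P⟩

lemma supp_appendPath [DecidableEq σ] {p r q : σ} {u v : List α} (P : A.Path p r u)
    (Q : A.Path r q v) : (appendPath P Q).supp = P.supp ∪ Q.supp := by
  induction P with
  | nil s => cases Q <;> simp [appendPath]
  | cons t s u a x ht P ih => simp [appendPath, ih]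

lemma start_mem_supp [DecidableEq σ] {p q : σ} {w : List α} (P : A.Path p q w) : p ∈ P.supp := by
  cases P <;> simp

lemma exists_split_of_mem_supp [DecidableEq σ] {p q s : σ} {w : List α} (P : A.Path p q w)
    (hs : s ∈ P.supp) :
    ∃ u v, w = u ++ v ∧ ∃ (P₁ : A.Path p s u) (P₂ : A.Path s q v), P.supp = P₁.supp ∪ P₂.supp := by
  induction P with
  | nil r =>
    obtain rfl : s = r := by simpa using hs
    exact ⟨[], [], rfl, .nil s, .nil s, by simp⟩
  | cons t r q a x ht P ih =>
    by_cases hsr : s = r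
    · subst hsr
      exact ⟨[], a :: x, rfl, .nil s, .cons t s q a x ht P, by simp⟩
    · obtain ⟨u, v, rfl, P₁, P₂, hP⟩ := ih (by simpa [hsr] using hs)
      exact ⟨a :: u, v, rfl, .cons t r s a u ht P₁, P₂, by simp [hP]⟩

lemma exists_cycle_of_card_supp_le [DecidableEq σ] {p q : σ} {w : List α} (P : A.Path p q w)
    (hP : P.supp.card ≤ w.length) :
    ∃ s ∈ P.supp, ∃ u c v, w = u ++ c ++ v ∧ c ≠ [] ∧
      Nonempty (A.Path p s u) ∧ Nonempty (A.Path s s c) ∧ Nonempty (A.Path s q v) := by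
  induction P with
  | nil s => simp at hP
  | cons t p q a x ht P ih =>
    by_cases hp : p ∈ P.supp
    · obtain ⟨c, v, rfl, P₁, P₂, -⟩ := exists_split_of_mem_supp P hp
      exact ⟨p, by simp, [], a :: c, v, rfl, by simp, ⟨.nil p⟩, ⟨.cons t p p a c ht P₁⟩, ⟨P₂⟩⟩
    · obtain ⟨s, hs, u, c, v, rfl, hc, ⟨Pu⟩, Pc, Pv⟩ :=
        ih (by simpa [← Finset.insert_eq, hp] using hP)
      exact ⟨s, by simp [hs], a :: u, c, v, rfl, hc, ⟨.cons t p s a u ht Pu⟩, Pc, Pv⟩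

lemma exists_cycle_or_exists_exit [Fintype σ] {p q : σ} {w : List α} (P : A.Path p q w)
    (hw : Fintype.card σ ≤ w.length) (V : Finset σ) :
    (∃ s ∈ V, ∃ u c v, w = u ++ c ++ v ∧ c ≠ [] ∧ c.length ≤ Fintype.card σ ∧
      Nonempty (A.Path p s u) ∧ Nonempty (A.Path s s c) ∧ Nonempty (A.Path s q v)) ∨
    ∃ s ∉ V, ∃ u v, w = u ++ v ∧ u.length ≤ Fintype.card σ ∧
      Nonempty (A.Path p s u) ∧ Nonempty (A.Path s q v) := by
  classical
  obtain ⟨b, z, rfl, hb⟩ : ∃ b z, w = b ++ z ∧ b.length = Fintype.card σ :=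
    ⟨_, _, (List.take_append_drop (Fintype.card σ) w).symm, List.length_take_of_le hw⟩
  obtain ⟨r, ⟨B⟩, ⟨Z⟩⟩ := exists_paths_of_append P
  by_cases hBV : B.supp ⊆ V
  · obtain ⟨s, hs, u, c, v, rfl, hc, Pu, Pc, ⟨Pv⟩⟩ :=
      exists_cycle_of_card_supp_le B (hb ▸ B.supp.card_le_univ)
    simp only [List.length_append] at hb
    exact .inl ⟨s, hBV hs, u, c, v ++ z, by simp, hc, by omega, Pu, Pc, ⟨appendPath Pv Z⟩⟩
  · obtain ⟨s, hs, hsV⟩ := Finset.not_subset.1 hBV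
    obtain ⟨u, v, rfl, Pu, Pv, -⟩ := exists_split_of_mem_supp B hs
    simp only [List.length_append] at hb
    exact .inr ⟨s, hsV, u, v ++ z, by simp, by omega, ⟨Pu⟩, ⟨appendPath Pv Z⟩⟩

end Paths

section Pumping

variable {m : ℕ} {σ : Type*} [Fintype σ] {A : NFA (Fin m) σ}

/-- The Parikh images of the nonempty words, no longer than the number of states, that label a
cycle through a state of `V`. -/
def cycleVectors (A : NFA (Fin m) σ) (V : Finset σ) : Set (Fin m → ℕ) :=
  {x | ∃ s ∈ V, ∃ c : List (Fin m),
    c ≠ [] ∧ c.length ≤ Fintype.card σ ∧ Nonempty (A.Path s s c) ∧ parikh c = x}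

lemma cycleVectors_mono {V W : Finset σ} (h : V ⊆ W) : cycleVectors A V ⊆ cycleVectors A W :=
  fun _ ⟨s, hs, hc⟩ => ⟨s, h hs, hc⟩

lemma le_card_of_mem_cycleVectors {V : Finset σ} {x : Fin m → ℕ} (hx : x ∈ cycleVectors A V)
    (i : Fin m) : x i ≤ Fintype.card σ := by
  obtain ⟨s, -, c, -, hc, -, rfl⟩ := hx
  exact (parikh_le_length c i).trans hc

lemma ne_zero_of_mem_cycleVectors {V : Finset σ} {x : Fin m → ℕ} (hx : x ∈ cycleVectors A V) :
    x ≠ 0 := by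
  obtain ⟨s, -, c, hc, -, -, rfl⟩ := hx
  obtain ⟨i, hi⟩ := List.exists_mem_of_ne_nil c hc
  exact fun h => parikh_apply_ne_zero.2 hi (congrFun h i)

lemma exists_path_add_of_mem_closure [DecidableEq σ] {p q : σ} {V : Finset σ} {y : Fin m → ℕ}
    (hy : y ∈ AddSubmonoid.closure (cycleVectors A V)) {w : List (Fin m)} (P : A.Path p q w)
    (hV : V ⊆ P.supp) :
    ∃ (w' : List (Fin m)) (P' : A.Path p q w'), parikh w' = parikh w + y ∧ V ⊆ P'.supp := by
  induction hy using AddSubmonoid.closure_induction generalizing w with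
  | mem x hx =>
    obtain ⟨s, hs, c, -, -, ⟨C⟩, rfl⟩ := hx
    obtain ⟨u, v, rfl, P₁, P₂, hP⟩ := exists_split_of_mem_supp P (hV hs)
    refine ⟨u ++ (c ++ v), appendPath P₁ (appendPath C P₂), ?_, hV.trans ?_⟩
    · simp only [parikh_append]
      abel
    · rw [supp_appendPath, supp_appendPath, hP]
      exact Finset.union_subset_union_right Finset.subset_union_right
  | zero => exact ⟨w, P, (add_zero _).symm, hV⟩
  | add x y _ _ ihx ihy =>
    obtain ⟨w₁, P₁, hw₁, hV₁⟩ := ihx P hV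
    obtain ⟨w₂, P₂, hw₂, hV₂⟩ := ihy P₁ hV₁
    exact ⟨w₂, P₂, by rw [hw₂, hw₁, add_assoc], hV₂⟩

-- As long as the path is long, either a cycle through a state of `V` is cut out and stored in `y`,
-- or a short prefix leading to a new state is kept and this state joins `V`.
lemma exists_short_path [DecidableEq σ] {p q : σ} {w : List (Fin m)} (P : A.Path p q w)
    {V : Finset σ} (hp : p ∈ V) :
    ∃ (w' : List (Fin m)) (P' : A.Path p q w'),
      w'.length ≤ (Fintype.card σ + 1 - V.card) * Fintype.card σ ∧
      ∃ y ∈ AddSubmonoid.closure (cycleVectors A (V ∪ P'.supp)), parikh w = parikh w' + y := by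
  induction hL : w.length using Nat.strong_induction_on generalizing p w V with | h L ih =>
  subst hL
  by_cases hw : w.length ≤ Fintype.card σ
  · have := V.card_le_univ
    exact ⟨w, P, hw.trans (Nat.le_mul_of_pos_left _ (by omega)), 0, zero_mem _, by simp⟩
  obtain ⟨s, hs, u, c, v, rfl, hc, hcσ, ⟨Pu⟩, Pc, ⟨Pv⟩⟩ | ⟨s, hs, u, v, rfl, huσ, ⟨Pu⟩, ⟨Pv⟩⟩ :=
    exists_cycle_or_exists_exit P (not_le.1 hw).le V
  · have hc_pos := List.length_pos_iff.2 hc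
    obtain ⟨w', P', hw', y, hy, he⟩ := ih (u ++ v).length
      (by simp only [List.length_append]; omega) (appendPath Pu Pv) hp rfl
    refine ⟨w', P', hw', y + parikh c, add_mem hy (AddSubmonoid.subset_closure ?_), ?_⟩
    · exact ⟨s, Finset.mem_union_left _ hs, c, hc, hcσ, Pc, rfl⟩
    · rw [← add_assoc, ← he]
      simp only [parikh_append]
      abel
  · have hu : u ≠ [] := by
      rintro rfl
      cases Pu
      exact hs hp
    have hu_pos := List.length_pos_iff.2 hu
    obtain ⟨w', P', hw', y, hy, he⟩ :=
      ih v.length (by rw [List.length_append]; omega) Pv (Finset.mem_insert_self s V) rfl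
    refine ⟨u ++ w', appendPath Pu P', ?_, y,
      AddSubmonoid.closure_mono (cycleVectors_mono ?_) hy, ?_⟩
    · have hcard : (insert s V).card = V.card + 1 := Finset.card_insert_of_notMem hs
      obtain ⟨d, hd⟩ := Nat.exists_eq_add_of_le (hcard ▸ (insert s V).card_le_univ)
      rw [hcard, show Fintype.card σ + 1 - (V.card + 1) = d + 1 by omega] at hw'
      rw [show Fintype.card σ + 1 - V.card = d + 1 + 1 by omega, add_one_mul, List.length_append]
      omega
    · rw [supp_appendPath, Finset.insert_union, Finset.insert_subset_iff]
      exact ⟨by simp [start_mem_supp], Finset.union_subset_union_right Finset.subset_union_right⟩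
    · rw [parikh_append, parikh_append, he, add_assoc]

lemma exists_offset_of_mem_parikhImage {x : Fin m → ℕ} (hx : x ∈ parikhImage A.accepts) :
    ∃ (b : Fin m → ℕ) (V : Finset σ), (∀ i, b i ≤ Fintype.card σ * Fintype.card σ) ∧
      (∃ y ∈ AddSubmonoid.closure (cycleVectors A V), x = b + y) ∧
      ∀ y ∈ AddSubmonoid.closure (cycleVectors A V), b + y ∈ parikhImage A.accepts := by
  classical
  obtain ⟨w, hw, rfl⟩ := hx
  obtain ⟨p, hp, q, hq, ⟨P⟩⟩ := NFA.accepts_iff_exists_path.1 hw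
  obtain ⟨w', P', hw', y, hy, he⟩ := exists_short_path P (Finset.mem_singleton_self p)
  have hpV : {p} ∪ P'.supp ⊆ P'.supp :=
    Finset.union_subset (Finset.singleton_subset_iff.2 (start_mem_supp P')) le_rfl
  refine ⟨parikh w', {p} ∪ P'.supp, fun i => (parikh_le_length w' i).trans (by simpa using hw'),
    ⟨y, hy, he⟩, fun z hz => ?_⟩
  obtain ⟨w'', P'', hw'', -⟩ := exists_path_add_of_mem_closure hz P' hpV
  exact ⟨w'', NFA.accepts_iff_exists_path.2 ⟨p, hp, q, hq, ⟨P''⟩⟩, hw''⟩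

end Pumping

section Relations

variable {ι κ : Type*} [Fintype κ] {g : κ → ι → ℕ} {n : ℕ}

attribute [local instance] Matrix.seminormedAddCommGroup in
lemma exists_int_relation (hgn : ∀ i a, g i a ≤ n) {N : Finset ι} (hgN : ∀ i a, g i a ≠ 0 → a ∈ N)
    (hN : N.card < Fintype.card κ) :
    ∃ t : κ → ℤ, t ≠ 0 ∧ (∀ i, |t i| ≤ ((Fintype.card κ * (n + 1)) ^ N.card : ℕ)) ∧
      ∀ a, ∑ i, t i * g i a = 0 := by
  rcases N.eq_empty_or_nonempty with rfl | hN_nonempty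
  · have : Nonempty κ := Fintype.card_pos_iff.1 (by simpa using hN)
    exact ⟨1, one_ne_zero, by simp, fun a =>
      Finset.sum_eq_zero fun i _ => by simp [not_imp_comm.1 (hgN i a)]⟩
  let G : Matrix N κ ℤ := fun a i => g i a
  obtain ⟨t, ht₀, ht, htB⟩ := Int.Matrix.exists_ne_zero_int_vec_norm_le G (by simpa) (by simpa)
  have hG : ‖G‖ ≤ n := (Matrix.norm_le_iff n.cast_nonneg).2 fun a i => by simpa [G] using hgn i a
  have hbound : ‖t‖ ≤ ((Fintype.card κ * (n + 1)) ^ N.card : ℝ) := by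
    have hκ : (1 : ℝ) ≤ Fintype.card κ := mod_cast hN.pos
    have hNκ : (N.card : ℝ) + 1 ≤ Fintype.card κ := mod_cast hN
    calc ‖t‖ ≤ (Fintype.card κ * max 1 ‖G‖) ^ (N.card / (Fintype.card κ - N.card) : ℝ) := by
          simpa using htB
      _ ≤ (Fintype.card κ * max 1 ‖G‖) ^ (N.card : ℝ) := by
          refine Real.rpow_le_rpow_of_exponent_le ?_ (div_le_self N.card.cast_nonneg (by linarith))
          exact one_le_mul_of_one_le_of_one_le hκ (le_max_left _ _)
      _ ≤ (Fintype.card κ * (n + 1)) ^ N.card := by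
          rw [Real.rpow_natCast]
          gcongr
          exact max_le (by simp) (by linarith)
  refine ⟨t, ht₀, fun i => ?_, fun a => ?_⟩
  · have := (norm_le_pi_norm t i).trans hbound
    rw [Int.norm_eq_abs] at this
    exact_mod_cast this
  · by_cases ha : a ∈ N
    · simpa [G, Matrix.mulVec, dotProduct, mul_comm] using congrFun ht ⟨a, ha⟩
    · exact Finset.sum_eq_zero fun i _ => by simp [not_imp_comm.1 (hgN i a) ha]

lemma exists_int_relation_of_card_biUnion_lt [Fintype ι] [DecidableEq ι] (hgn : ∀ i a, g i a ≤ n)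
    {T : Finset κ} (hT : (T.biUnion fun i => {a | g i a ≠ 0}).card < T.card) :
    ∃ t : κ → ℤ, t ≠ 0 ∧ (∀ i ∉ T, t i = 0) ∧
      (∀ i, |t i| ≤ ((Fintype.card κ * (n + 1)) ^ Fintype.card ι : ℕ)) ∧
      ∀ a, ∑ i, t i * g i a = 0 := by
  classical
  obtain ⟨t, ht₀, htB, ht⟩ := exists_int_relation (g := fun i : T => g i) (fun i => hgn i)
    (N := T.biUnion fun i => {a | g i a ≠ 0})
    (fun i a h => Finset.mem_biUnion.2 ⟨i, i.2, by simpa using h⟩) (by simpa using hT)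
  have hpow : (Fintype.card T * (n + 1)) ^ (T.biUnion fun i => {a | g i a ≠ 0}).card ≤
      (Fintype.card κ * (n + 1)) ^ Fintype.card ι := by
    have hT_pos : 0 < T.card := Nat.zero_lt_of_lt hT
    have hTκ : T.card ≤ Fintype.card κ := T.card_le_univ
    rw [Fintype.card_coe]
    exact (Nat.pow_le_pow_left (by gcongr) _).trans
      (Nat.pow_le_pow_right (by positivity [hT_pos.trans_le hTκ]) (Finset.card_le_univ _))
  refine ⟨fun i => if h : i ∈ T then t ⟨i, h⟩ else 0, ?_, fun i hi => dif_neg hi, fun i => ?_,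
    fun a => ?_⟩
  · obtain ⟨i, hi⟩ := Function.ne_iff.1 ht₀
    exact Function.ne_iff.2 ⟨i, by simpa using hi⟩
  · beta_reduce
    split_ifs with h
    · exact (htB _).trans (mod_cast hpow)
    · simp
  · rw [← Finset.sum_subset T.subset_univ fun i _ hi => by simp [hi], ← Finset.sum_coe_sort]
    simpa using ht a

lemma finite_setOf_sum_smul_eq (hg₀ : ∀ i, g i ≠ 0) (x : ι → ℕ) :
    {c : κ → ℕ | ∑ i, c i • g i = x}.Finite := by
  classical
  choose a ha using fun i => Function.ne_iff.1 (hg₀ i)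
  refine (Set.finite_Iic fun i => x (a i)).subset ?_
  rintro c rfl i
  calc c i ≤ (c i • g i) (a i) := Nat.le_mul_of_pos_right _ (Nat.pos_of_ne_zero (ha i))
    _ ≤ ∑ j, (c j • g j) (a i) :=
        Finset.single_le_sum (f := fun j => (c j • g j) (a i)) (by simp) (Finset.mem_univ i)
    _ = (∑ j, c j • g j) (a i) := (Finset.sum_apply _ _ _).symm

lemma sum_sq_lt_of_ne_zero (c : κ → ℤ) {t : κ → ℤ} (ht : t ≠ 0) :
    ∑ i, c i ^ 2 < ∑ i, (c i + t i) ^ 2 ∨ ∑ i, c i ^ 2 < ∑ i, (c i + -t i) ^ 2 := by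
  obtain ⟨i, hi⟩ : ∃ i, t i ≠ 0 := Function.ne_iff.1 ht
  have ht_pos : 0 < ∑ i, t i ^ 2 :=
    Finset.sum_pos' (fun i _ => sq_nonneg (t i)) ⟨i, Finset.mem_univ i, by positivity⟩
  have hparallelogram : ∑ i, (c i + t i) ^ 2 + ∑ i, (c i + -t i) ^ 2 =
      2 * ∑ i, c i ^ 2 + 2 * ∑ i, t i ^ 2 := by
    simp only [Finset.mul_sum, ← Finset.sum_add_distrib]
    exact Finset.sum_congr rfl fun i _ => by ring
  by_contra! h
  linarith

-- Hall's condition holds for the representation maximizing `∑ i, c i ^ 2`: a violation would give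
-- a short integer relation `t`, and one of `c + t` and `c - t` has a larger sum of squares.
lemma exists_injective_of_sum_smul [Fintype ι] (hg₀ : ∀ i, g i ≠ 0) (hgn : ∀ i a, g i a ≤ n) {D : ℕ}
    (hD : (Fintype.card κ * (n + 1)) ^ Fintype.card ι ≤ D) (c₀ : κ → ℕ) :
    ∃ c : κ → ℕ, ∑ i, c i • g i = ∑ i, c₀ i • g i ∧
      ∃ f : {i // D ≤ c i} → ι, f.Injective ∧ ∀ i, g i.1 (f i) ≠ 0 := by
  classical
  obtain ⟨c, hc, hmax⟩ := Set.exists_max_image _ (fun c : κ → ℕ => ∑ i, (c i : ℤ) ^ 2)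
    (finite_setOf_sum_smul_eq hg₀ (∑ i, c₀ i • g i)) ⟨c₀, rfl⟩
  have hnot_lt (t : κ → ℤ) (htD : ∀ i, 0 ≤ c i + t i) (ht : ∀ a, ∑ i, t i * g i a = 0) :
      ¬ ∑ i, (c i : ℤ) ^ 2 < ∑ i, (c i + t i) ^ 2 := by
    lift (fun i => c i + t i) to κ → ℕ using htD with d hd
    have hd (i) : c i + t i = d i := (congrFun hd i).symm
    simp only [hd, not_lt]
    refine hmax d (Eq.trans (funext fun a => ?_) hc)
    zify
    simp only [Finset.sum_apply, Pi.smul_apply, smul_eq_mul]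
    push_cast
    simp only [← hd, add_mul, Finset.sum_add_distrib, ht, add_zero]
  refine ⟨c, hc, ?_⟩
  suffices hHall : ∀ S : Finset {i // D ≤ c i},
      S.card ≤ (S.biUnion fun i => ({a | g i.1 a ≠ 0} : Finset ι)).card by
    simpa using (Finset.all_card_le_biUnion_card_iff_exists_injective _).1 hHall
  intro S
  by_contra! hS
  obtain ⟨t, ht₀, htS, htD, ht⟩ := exists_int_relation_of_card_biUnion_lt hgn
    (T := S.map (.subtype _)) (by simpa [Finset.map_eq_image, Finset.image_biUnion,
      Finset.card_image_of_injective _ Subtype.val_injective] using hS)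
  have habs (i) : |t i| ≤ c i := by
    by_cases hi : i ∈ S.map (.subtype _)
    · obtain ⟨j, -, rfl⟩ := Finset.mem_map.1 hi
      exact (htD _).trans (mod_cast hD.trans j.2)
    · simp [htS i hi]
  have hnonneg (i) := abs_le.1 (habs i)
  rcases sum_sq_lt_of_ne_zero (fun i => (c i : ℤ)) ht₀ with h | h
  · exact hnot_lt t (fun i => by linarith [hnonneg i]) ht h
  · exact hnot_lt (-t) (fun i => by rw [Pi.neg_apply]; linarith [hnonneg i]) (by simp [ht]) h

end Relations

section LinearSets

open Pointwise

variable {ι : Type*} {n : ℕ}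

/-- The linear set with offset `u` and periods `P a`. The periods are indexed by the letters; unused
indices carry the period `0`. -/
def linearSet (u : ι → ℕ) (P : ι → ι → ℕ) : Set (ι → ℕ) :=
  u +ᵥ (AddSubmonoid.closure (Set.range P) : Set (ι → ℕ))

/-- Each nonzero period contains the letter that indexes it. This allows a deterministic automaton
to recognize the period from the first letter of a suitable word representing it. -/
def LetterIndexed (P : ι → ι → ℕ) : Prop := ∀ a, P a ≠ 0 → P a a ≠ 0

lemma mem_linearSet {u x : ι → ℕ} {P : ι → ι → ℕ} :
    x ∈ linearSet u P ↔ ∃ y ∈ AddSubmonoid.closure (Set.range P), u + y = x :=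
  Set.mem_vadd_set

lemma mem_linearSet_iff_exists_sum [Fintype ι] {u x : ι → ℕ} {P : ι → ι → ℕ} :
    x ∈ linearSet u P ↔ ∃ k : ι → ℕ, u + ∑ a, k a • P a = x := by
  simp [mem_linearSet, AddSubmonoid.mem_closure_range_iff_of_fintype]

lemma linearSet_zero (u : ι → ℕ) : linearSet u 0 = {u} := by
  have hbot : AddSubmonoid.closure (Set.range (0 : ι → ι → ℕ)) = ⊥ := by
    rw [eq_bot_iff, AddSubmonoid.closure_le]
    rintro _ ⟨_, rfl⟩
    rfl
  ext x
  simp [mem_linearSet, hbot, eq_comm]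

lemma mem_linearSet_shift_or_mem_linearSet_update [Fintype ι] [DecidableEq ι] {u x : ι → ℕ}
    {P : ι → ι → ℕ} (hx : x ∈ linearSet u P) (K : ℕ) :
    x ∈ linearSet (u + K • ∑ c, P c) P ∨
      ∃ c, P c ≠ 0 ∧ ∃ j < K, x ∈ linearSet (u + j • P c) (Function.update P c 0) := by
  simp only [mem_linearSet_iff_exists_sum] at hx ⊢
  obtain ⟨k, rfl⟩ := hx
  by_cases h : ∃ c, P c ≠ 0 ∧ k c < K
  · obtain ⟨c, hc, hk⟩ := h
    refine .inr ⟨c, hc, k c, hk, k, ?_⟩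
    rw [← Finset.add_sum_erase _ (fun a => k a • P a) (Finset.mem_univ c),
      ← Finset.add_sum_erase _ (fun a => k a • Function.update P c 0 a) (Finset.mem_univ c),
      Function.update_self, smul_zero, zero_add, add_assoc]
    congr 2
    refine Finset.sum_congr rfl fun a ha => ?_
    rw [Function.update_of_ne (Finset.ne_of_mem_erase ha)]
  · push Not at h
    refine .inl ⟨fun c => k c - K, ?_⟩
    rw [add_assoc, Finset.smul_sum, ← Finset.sum_add_distrib]
    congr 1
    refine Finset.sum_congr rfl fun c _ => ?_
    by_cases hc : P c = 0
    · simp [hc]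
    · rw [← add_smul, Nat.add_sub_cancel' (h c hc)]

lemma linearSet_add_subset {u v : ι → ℕ} {P Q : ι → ι → ℕ}
    (hv : v ∈ AddSubmonoid.closure (Set.range P)) (hQ : ∀ c, Q c = 0 ∨ Q c = P c) :
    linearSet (u + v) Q ⊆ linearSet u P := by
  intro x hx
  obtain ⟨y, hy, rfl⟩ := mem_linearSet.1 hx
  refine mem_linearSet.2 ⟨v + y, add_mem hv (AddSubmonoid.closure_le.2 ?_ hy), by rw [add_assoc]⟩
  rintro _ ⟨c, rfl⟩
  obtain h | h := hQ c
  · exact h ▸ zero_mem _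
  · exact h ▸ AddSubmonoid.subset_closure (Set.mem_range_self c)

lemma linearSet_shift_subset [Fintype ι] (u : ι → ℕ) (P : ι → ι → ℕ) (K : ℕ) :
    linearSet (u + K • ∑ c, P c) P ⊆ linearSet u P :=
  linearSet_add_subset (nsmul_mem (sum_mem fun c _ =>
    AddSubmonoid.subset_closure (Set.mem_range_self c)) K) fun _ => .inr rfl

lemma linearSet_update_subset [DecidableEq ι] (u : ι → ℕ) (P : ι → ι → ℕ) (c : ι) (j : ℕ) :
    linearSet (u + j • P c) (Function.update P c 0) ⊆ linearSet u P := by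
  refine linearSet_add_subset
    (nsmul_mem (AddSubmonoid.subset_closure (Set.mem_range_self c)) j) fun a => ?_
  by_cases h : a = c
  · exact .inl (h ▸ Function.update_self ..)
  · exact .inr (Function.update_of_ne h ..)

variable {κ : Type*} [Fintype κ] {g : κ → ι → ℕ}

-- A variant of Carathéodory's theorem: the generators with large coefficients become the periods,
-- each indexed by a letter of its own, and the others are absorbed by the offset.
lemma exists_mem_linearSet_of_mem_closure [Fintype ι] (hg₀ : ∀ i, g i ≠ 0) (hgn : ∀ i a, g i a ≤ n)
    {D : ℕ} (hD : (Fintype.card κ * (n + 1)) ^ Fintype.card ι ≤ D) {x : ι → ℕ}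
    (hx : x ∈ AddSubmonoid.closure (Set.range g)) :
    ∃ r ∈ AddSubmonoid.closure (Set.range g), (∀ a, r a ≤ Fintype.card κ * (D * n)) ∧
      ∃ P : ι → ι → ℕ, (∀ a, P a = 0 ∨ P a ∈ Set.range g) ∧ LetterIndexed P ∧
        x ∈ linearSet r P := by
  classical
  obtain ⟨c₀, rfl⟩ := AddSubmonoid.mem_closure_range_iff_of_fintype.1 hx
  obtain ⟨c, hc, f, hf, hgf⟩ := exists_injective_of_sum_smul hg₀ hgn hD c₀
  have hP (a : ι) : Function.extend f (fun i => g i.1) 0 a = 0 ∨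
      ∃ i, f i = a ∧ Function.extend f (fun i => g i.1) 0 a = g i.1 := by
    by_cases h : ∃ i, f i = a
    · obtain ⟨i, rfl⟩ := h
      exact .inr ⟨i, rfl, hf.extend_apply _ _ i⟩
    · exact .inl (Function.extend_apply' _ _ _ h)
  refine ⟨∑ i with ¬ D ≤ c i, c i • g i, sum_mem fun i _ => nsmul_mem
    (AddSubmonoid.subset_closure (Set.mem_range_self i)) _, fun a => ?_,
    Function.extend f (fun i => g i.1) 0, fun a => (hP a).imp_right ?_, fun a ha => ?_,
    mem_linearSet_iff_exists_sum.2 ⟨Function.extend f (fun i => c i.1) 0, ?_⟩⟩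
  · calc (∑ i with ¬ D ≤ c i, c i • g i) a = ∑ i with ¬ D ≤ c i, c i * g i a := by simp
      _ ≤ ∑ i with ¬ D ≤ c i, D * n := Finset.sum_le_sum fun i hi =>
          Nat.mul_le_mul (not_le.1 (Finset.mem_filter.1 hi).2).le (hgn i a)
      _ ≤ Fintype.card κ * (D * n) := by
          rw [Finset.sum_const, smul_eq_mul]
          exact Nat.mul_le_mul_right _ (Finset.card_le_univ _)
  · rintro ⟨i, -, h⟩
    exact ⟨i, h.symm⟩
  · obtain ⟨i, rfl, h⟩ := (hP a).resolve_left ha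
    exact h ▸ hgf i
  · have hlarge : ∑ a, Function.extend f (fun i => c i.1) 0 a •
        Function.extend f (fun i => g i.1) 0 a = ∑ i with D ≤ c i, c i • g i := by
      rw [Finset.sum_subtype _ (fun i => Finset.mem_filter_univ i) fun i => c i • g i]
      refine (Fintype.sum_of_injective f hf _ _ (fun a ha => ?_) fun i => ?_).symm
      · simp [Function.extend_apply' _ _ _ ha]
      · rw [hf.extend_apply, hf.extend_apply]
    rw [← hc, hlarge, Finset.sum_filter_not_add_sum_filter]

/-- The bound on the offsets of the linear sets into which the Parikh image of an NFA with `n`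
states over `m` letters decomposes. -/
def offsetBound (m n : ℕ) : ℕ := n * n + (n + 1) ^ m * (((n + 1) ^ m * (n + 1)) ^ m * n)

lemma exists_linearSet_of_mem_parikhImage {m : ℕ} {σ : Type*} [Fintype σ] (A : NFA (Fin m) σ)
    {x : Fin m → ℕ} (hx : x ∈ parikhImage A.accepts) :
    ∃ (u : Fin m → ℕ) (P : Fin m → Fin m → ℕ), (∀ a, u a ≤ offsetBound m (Fintype.card σ)) ∧
      (∀ a b, P a b ≤ Fintype.card σ) ∧ LetterIndexed P ∧
      x ∈ linearSet u P ∧ linearSet u P ⊆ parikhImage A.accepts := by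
  obtain ⟨b, V, hb, ⟨y, hy, rfl⟩, himage⟩ := exists_offset_of_mem_parikhImage hx
  set n := Fintype.card σ
  have hbox : cycleVectors A V ⊆ (Finset.Iic fun _ => n : Finset (Fin m → ℕ)) :=
    fun v hv => Finset.mem_coe.2 (Finset.mem_Iic.2 (le_card_of_mem_cycleVectors hv))
  have : Fintype (cycleVectors A V) := ((Finset.finite_toSet _).subset hbox).fintype
  have hcard : Fintype.card (cycleVectors A V) ≤ (n + 1) ^ m := by
    have := Set.ncard_le_ncard hbox (Finset.finite_toSet _)
    rw [Set.ncard_coe_finset, ← Nat.card_coe_set_eq, Nat.card_eq_fintype_card] at this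
    simpa [Pi.card_Iic] using this
  have hrange : Set.range (Subtype.val : cycleVectors A V → Fin m → ℕ) = cycleVectors A V :=
    Subtype.range_coe
  rw [← hrange] at hy himage
  obtain ⟨r, hr, hrn, P, hP, hPind, hmem⟩ := exists_mem_linearSet_of_mem_closure
    (fun v => ne_zero_of_mem_cycleVectors v.2) (fun v => le_card_of_mem_cycleVectors v.2)
    (D := ((n + 1) ^ m * (n + 1)) ^ m) (by rw [Fintype.card_fin]; gcongr) hy
  refine ⟨b + r, P, fun a => ?_, fun a c => ?_, hPind, ?_, ?_⟩
  · exact add_le_add (hb a) ((hrn a).trans (Nat.mul_le_mul_right _ hcard))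
  · obtain h | ⟨v, h⟩ := hP a
    · simp [h]
    · exact h ▸ le_card_of_mem_cycleVectors v.2 c
  · rw [linearSet, add_vadd, ← linearSet]
    exact Set.vadd_mem_vadd_set hmem
  · intro z hz
    obtain ⟨y, hy, rfl⟩ := mem_linearSet.1 hz
    rw [add_assoc]
    refine himage _ (add_mem hr (AddSubmonoid.closure_le.2 ?_ hy))
    rintro _ ⟨a, rfl⟩
    obtain h | h := hP a
    · exact h ▸ zero_mem _
    · exact AddSubmonoid.subset_closure h

end LinearSets

section Automata

open Pointwise

variable {m : ℕ}

/-- `X` is the Parikh image of the language of a DFA with at most `k` states. -/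
def HasParikhDFA (k : ℕ) (X : Set (Fin m → ℕ)) : Prop :=
  ∃ (σ : Type) (_ : Fintype σ) (B : DFA (Fin m) σ),
    Fintype.card σ ≤ k ∧ parikhImage B.accepts = X

lemma HasParikhDFA.mono {k l : ℕ} {X : Set (Fin m → ℕ)} (h : HasParikhDFA k X) (hkl : k ≤ l) :
    HasParikhDFA l X := by
  obtain ⟨σ, _, B, hB, hX⟩ := h
  exact ⟨σ, _, B, hB.trans hkl, hX⟩

lemma HasParikhDFA.iUnion {ι : Type} [Fintype ι] {k : ι → ℕ} {X : ι → Set (Fin m → ℕ)}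
    (h : ∀ i, HasParikhDFA (k i) (X i)) : HasParikhDFA (∏ i, k i) (⋃ i, X i) := by
  classical
  choose σ _ B hB hX using h
  let C : DFA (Fin m) (∀ i, σ i) :=
    { step := fun s a i => (B i).step (s i) a
      start := fun i => (B i).start
      accept := {s | ∃ i, s i ∈ (B i).accept} }
  have hC (w : List (Fin m)) (s : ∀ i, σ i) : C.evalFrom s w = fun i => (B i).evalFrom (s i) w := by
    induction w generalizing s with
    | nil => rfl
    | cons c _ ih => exact ih _
  have hmem (w : List (Fin m)) : w ∈ C.accepts ↔ ∃ i, w ∈ (B i).accepts := by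
    change (∃ i, C.evalFrom C.start w i ∈ (B i).accept) ↔ _
    rw [hC]
    rfl
  refine ⟨∀ i, σ i, inferInstance, C, ?_, ?_⟩
  · rw [Fintype.card_pi]
    exact Finset.prod_le_prod' fun i _ => hB i
  · ext x
    simp only [← hX, Set.mem_iUnion]
    constructor
    · rintro ⟨w, hw, rfl⟩
      obtain ⟨i, hi⟩ := (hmem w).1 hw
      exact ⟨i, w, hi, rfl⟩
    · rintro ⟨i, w, hw, rfl⟩
      exact ⟨w, (hmem w).2 ⟨i, hw⟩, rfl⟩

lemma hasParikhDFA_of_partial {τ : Type} (δ : τ → Fin m → Option τ) {s₀ : τ} (F : Set τ)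
    {S : Finset τ} (hs₀ : s₀ ∈ S) (hS : ∀ s ∈ S, ∀ c, ∀ t ∈ δ s c, t ∈ S) :
    HasParikhDFA (S.card + 1) (parikh '' {w | ∃ t ∈ F, w.foldlM δ s₀ = some t}) := by
  have hbind (o : Option τ) (ho : o ∈ S.insertNone) (c : Fin m) :
      (o.bind (δ · c)) ∈ S.insertNone := by
    simp only [Finset.mem_insertNone, Option.mem_def, Option.bind_eq_some_iff] at ho ⊢
    rintro t ⟨s, hs, ht⟩
    exact hS s (ho s hs) c t ht
  let B : DFA (Fin m) S.insertNone :=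
    { step := fun o c => ⟨o.1.bind (δ · c), hbind o.1 o.2 c⟩
      start := ⟨some s₀, by simpa using hs₀⟩
      accept := {o | ∃ t ∈ F, o.1 = some t} }
  have hB (w : List (Fin m)) (o : S.insertNone) :
      (B.evalFrom o w).1 = o.1.bind (w.foldlM δ) := by
    induction w generalizing o with
    | nil => exact (Option.bind_fun_some o.1).symm
    | cons c w ih => exact (ih _).trans (Option.bind_assoc _ _ _)
  refine ⟨S.insertNone, inferInstance, B, by simp, congrArg (parikh '' ·) ?_⟩
  ext w
  change (∃ t ∈ F, (B.evalFrom B.start w).1 = some t) ↔ _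
  rw [hB]
  rfl

open Classical in
/-- Counts the letters read, rejecting as soon as the counts leave the box below `M`. -/
noncomputable def countStep (M v : Fin m → ℕ) (c : Fin m) : Option (Fin m → ℕ) :=
  if v + Pi.single c 1 ≤ M then some (v + Pi.single c 1) else none

open Classical in
lemma foldlM_countStep {M v : Fin m → ℕ} (hv : v ≤ M) (w : List (Fin m)) :
    w.foldlM (countStep M) v = if v + parikh w ≤ M then some (v + parikh w) else none := by
  induction w generalizing v with
  | nil => simp [parikh_nil, hv]
  | cons c w ih =>
    rw [List.foldlM_cons, countStep, parikh_cons, ← add_assoc]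
    by_cases hc : v + Pi.single c 1 ≤ M
    · simp [hc, ih hc]
    · have : ¬ v + Pi.single c 1 + parikh w ≤ M := fun h => hc (le_self_add.trans h)
      simp [hc, this]

lemma hasParikhDFA_of_subset_Iic {M : Fin m → ℕ} {X : Set (Fin m → ℕ)} (hX : X ⊆ Set.Iic M) :
    HasParikhDFA ((Finset.Iic M).card + 1) X := by
  have hstep : ∀ v ∈ Finset.Iic M, ∀ c, ∀ t ∈ countStep M v c, t ∈ Finset.Iic M := by
    simp +contextual [countStep]
  convert hasParikhDFA_of_partial (countStep M) X (Finset.mem_Iic.2 (zero_le (a := M))) hstep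
  ext x
  simp only [foldlM_countStep (zero_le (a := M)), zero_add]
  constructor
  · intro hx
    obtain ⟨w, rfl⟩ := parikh_surjective x
    exact ⟨w, ⟨_, hx, if_pos (by simpa using hX hx)⟩, rfl⟩
  · rintro ⟨w, ⟨t, ht, hwt⟩, rfl⟩
    obtain ⟨-, hwt⟩ := Option.ite_none_right_eq_some.1 hwt
    exact Option.some_inj.1 hwt ▸ ht

/-- The state `v` holds the letters still to be read. Once it is exhausted, the next letter `c`
selects the period `P c`. -/
def consumeStep (P : Fin m → Fin m → ℕ) (v : Fin m → ℕ) (c : Fin m) : Option (Fin m → ℕ) :=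
  let v' := if v = 0 then P c else v
  if v' c = 0 then none else some (v' - Pi.single c 1)

variable {P : Fin m → Fin m → ℕ}

lemma single_add_sub_single {v : Fin m → ℕ} {c : Fin m} (h : v c ≠ 0) :
    Pi.single c 1 + (v - Pi.single c 1) = v :=
  add_tsub_cancel_of_le (update_le_iff.2 ⟨Nat.one_le_iff_ne_zero.2 h, fun _ _ => zero_le⟩)

lemma parikh_mem_linearSet_of_foldlM_consumeStep {v : Fin m → ℕ} {w : List (Fin m)}
    (h : w.foldlM (consumeStep P) v = some 0) : parikh w ∈ linearSet v P := by
  induction w generalizing v with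
  | nil =>
    obtain rfl : v = 0 := by simpa using h
    exact mem_linearSet.2 ⟨0, zero_mem _, by simp [parikh_nil]⟩
  | cons c w ih =>
    obtain ⟨v', hv', hw⟩ := Option.bind_eq_some_iff.1 h
    obtain ⟨hc, hv'⟩ := Option.ite_none_left_eq_some.1 hv'
    obtain ⟨y, hy, hyw⟩ := mem_linearSet.1 (ih hw)
    rw [parikh_cons, ← hyw, ← Option.some_inj.1 hv', ← add_assoc, single_add_sub_single hc]
    split_ifs with hv
    · exact mem_linearSet.2 ⟨P c + y,
        add_mem (AddSubmonoid.subset_closure (Set.mem_range_self c)) hy, by simp [hv]⟩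
    · exact mem_linearSet.2 ⟨y, hy, rfl⟩

lemma foldlM_consumeStep_parikh (w : List (Fin m)) :
    w.foldlM (consumeStep P) (parikh w) = some 0 := by
  induction w with
  | nil => simp [parikh_nil]
  | cons c w ih =>
    have hc : parikh (c :: w) c ≠ 0 := parikh_apply_ne_zero.2 List.mem_cons_self
    have hne : parikh (c :: w) ≠ 0 := fun h => hc (congrFun h c)
    simpa [consumeStep, hc, hne, parikh_cons] using ih

lemma exists_word_foldlM_consumeStep (hP : LetterIndexed P) {y : Fin m → ℕ}
    (hy : y ∈ AddSubmonoid.closure (Set.range P)) :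
    ∃ w, parikh w = y ∧ w.foldlM (consumeStep P) 0 = some 0 := by
  induction hy using AddSubmonoid.closure_induction with
  | mem x hx =>
    obtain ⟨a, rfl⟩ := hx
    by_cases ha : P a = 0
    · exact ⟨[], by rw [parikh_nil, ha], rfl⟩
    obtain ⟨w, hw⟩ := parikh_surjective (P a - Pi.single a 1)
    refine ⟨a :: w, by rw [parikh_cons, hw, single_add_sub_single (hP a ha)], ?_⟩
    simpa [consumeStep, hP a ha, ← hw] using foldlM_consumeStep_parikh w
  | zero => exact ⟨[], parikh_nil, rfl⟩
  | add x y _ _ ihx ihy =>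
    obtain ⟨v, rfl, hv⟩ := ihx
    obtain ⟨w, rfl, hw⟩ := ihy
    exact ⟨v ++ w, parikh_append v w, by rw [List.foldlM_append, hv]; exact hw⟩

lemma hasParikhDFA_linearSet (hP : LetterIndexed P) {u M : Fin m → ℕ} (hu : u ≤ M)
    (hPM : ∀ a, P a ≤ M) : HasParikhDFA ((Finset.Iic M).card + 1) (linearSet u P) := by
  have hstep : ∀ v ∈ Finset.Iic M, ∀ c, ∀ t ∈ consumeStep P v c, t ∈ Finset.Iic M := by
    intro v hv c t ht
    obtain ⟨-, ht⟩ := Option.ite_none_left_eq_some.1 ht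
    obtain rfl := Option.some_inj.1 ht
    rw [Finset.mem_Iic] at hv ⊢
    refine tsub_le_self.trans ?_
    split_ifs
    exacts [hPM c, hv]
  convert hasParikhDFA_of_partial (consumeStep P) {0} (Finset.mem_Iic.2 hu) hstep
  ext x
  simp only [Set.mem_singleton_iff, exists_eq_left]
  constructor
  · intro hx
    obtain ⟨y, hy, rfl⟩ := mem_linearSet.1 hx
    obtain ⟨v, rfl⟩ := parikh_surjective u
    obtain ⟨w, rfl, hw⟩ := exists_word_foldlM_consumeStep hP hy
    refine ⟨v ++ w, ?_, parikh_append v w⟩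
    rw [Set.mem_ofPred_eq, List.foldlM_append, foldlM_consumeStep_parikh]
    exact hw
  · rintro ⟨w, hw, rfl⟩
    exact parikh_mem_linearSet_of_foldlM_consumeStep hw

/-- Counts the letters `a` read; the first `b`, after `i` letters `a`, starts the automaton `B i` on
the rest of the word. -/
def dispatchStep {N : ℕ} {σ : Fin N → Type*} (B : ∀ i, DFA (Fin m) (σ i)) (a b : Fin m) :
    ℕ ⊕ (Σ i, σ i) → Fin m → Option (ℕ ⊕ (Σ i, σ i))
  | .inl i, c =>
    if c = a then if i < N then some (.inl (i + 1)) else none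
    else if c = b then if h : i < N then some (.inr ⟨⟨i, h⟩, (B ⟨i, h⟩).start⟩) else none
    else none
  | .inr ⟨i, s⟩, c => some (.inr ⟨i, (B i).step s c⟩)

section Dispatch

variable {N : ℕ} {σ : Fin N → Type*} {B : ∀ i, DFA (Fin m) (σ i)} {a b : Fin m}

lemma foldlM_dispatchStep_inr (i : Fin N) (s : σ i) (w : List (Fin m)) :
    w.foldlM (dispatchStep B a b) (.inr ⟨i, s⟩) = some (.inr ⟨i, (B i).evalFrom s w⟩) := by
  induction w generalizing s with
  | nil => rfl
  | cons c _ ih => exact ih _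

lemma foldlM_dispatchStep_replicate_append (hab : a ≠ b) {i k : ℕ} {j : Fin N} (h : i + k = j)
    (w : List (Fin m)) :
    (List.replicate k a ++ b :: w).foldlM (dispatchStep B a b) (.inl i) =
      some (.inr ⟨j, (B j).eval w⟩) := by
  induction k generalizing i with
  | zero =>
    obtain rfl : i = j := h
    simpa [dispatchStep, hab.symm, DFA.eval] using foldlM_dispatchStep_inr _ _ w
  | succ k ih =>
    have hi : i < N := by omega
    simpa [List.replicate_succ, dispatchStep, hi] using ih (i := i + 1) (by omega)

lemma exists_eq_replicate_append_of_foldlM_dispatchStep {i : ℕ} {j : Fin N} {s : σ j}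
    {w : List (Fin m)} (h : w.foldlM (dispatchStep B a b) (.inl i) = some (.inr ⟨j, s⟩)) :
    ∃ k w', w = List.replicate k a ++ b :: w' ∧ i + k = j ∧ (B j).eval w' = s := by
  induction w generalizing i with
  | nil => simp at h
  | cons c w ih =>
    obtain ⟨t, ht, hw⟩ := Option.bind_eq_some_iff.1 h
    simp only [dispatchStep] at ht
    split_ifs at ht with hca hi hcb hi <;> obtain rfl := Option.some_inj.1 ht
    · obtain ⟨k, w', rfl, hk, hs⟩ := ih hw
      exact ⟨k + 1, w', by rw [hca, List.replicate_succ, List.cons_append], by omega, hs⟩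
    · rw [foldlM_dispatchStep_inr] at hw
      obtain ⟨rfl, rfl⟩ : (⟨i, hi⟩ : Fin N) = j ∧ HEq ((B ⟨i, hi⟩).eval w) s := by
        simpa [DFA.eval] using hw
      exact ⟨0, w, by simp [hcb], rfl, rfl⟩

end Dispatch

lemma hasParikhDFA_iUnion_vadd {N : ℕ} {a b : Fin m} (hab : a ≠ b) {k : ℕ}
    {X : Fin N → Set (Fin m → ℕ)} (h : ∀ i, HasParikhDFA k (X i)) :
    HasParikhDFA (N + N * k + 2)
      (⋃ i : Fin N, (Pi.single a i.1 + Pi.single b 1 : Fin m → ℕ) +ᵥ X i) := by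
  choose σ _ B hB hX using h
  let S : Finset (ℕ ⊕ Σ i, σ i) := (Finset.range (N + 1)).disjSum Finset.univ
  have hScard : S.card + 1 ≤ N + N * k + 2 := by
    have : ∑ i, Fintype.card (σ i) ≤ N * k := by
      simpa using Finset.sum_le_card_nsmul Finset.univ _ k fun i _ => hB i
    simp only [S, Finset.card_disjSum, Finset.card_range, Finset.card_univ, Fintype.card_sigma]
    omega
  have hstep : ∀ s ∈ S, ∀ c, ∀ t ∈ dispatchStep B a b s c, t ∈ S := by
    rintro (i | ⟨i, s⟩) - c t ht
    · simp only [dispatchStep] at ht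
      split_ifs at ht <;> cases ht <;> simp [S]; omega
    · obtain rfl := Option.some_inj.1 ht
      simp [S]
  refine HasParikhDFA.mono ?_ hScard
  convert hasParikhDFA_of_partial (dispatchStep B a b)
    {t | ∃ i, ∃ s ∈ (B i).accept, t = .inr ⟨i, s⟩} (show .inl 0 ∈ S by simp [S]) hstep
  ext x
  simp only [Set.mem_iUnion, Set.mem_vadd_set, vadd_eq_add, ← hX]
  constructor
  · rintro ⟨i, _, ⟨w, hw, rfl⟩, rfl⟩
    refine ⟨List.replicate i a ++ b :: w, ⟨_, ⟨i, _, hw, rfl⟩, ?_⟩, ?_⟩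
    · exact foldlM_dispatchStep_replicate_append hab (zero_add i.1) w
    · rw [parikh_append, parikh_replicate, parikh_cons, add_assoc]
  · rintro ⟨w, ⟨_, ⟨i, s, hs, rfl⟩, hw⟩, rfl⟩
    obtain ⟨k, w', rfl, hk, rfl⟩ := exists_eq_replicate_append_of_foldlM_dispatchStep hw
    refine ⟨i, _, ⟨w', hs, rfl⟩, ?_⟩
    rw [parikh_append, parikh_replicate, parikh_cons, add_assoc, ← hk, zero_add]

-- Offsets that are large at `a` leave room for the `i`-th linear set to be announced by the prefix
-- `a ^ i b`.
lemma hasParikhDFA_biUnion_linearSet {M : Fin m → ℕ} {a b : Fin m} (hab : a ≠ b)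
    {S : Finset ((Fin m → ℕ) × (Fin m → Fin m → ℕ))} (hSM : ∀ q ∈ S, q.1 ≤ M ∧ ∀ c, q.2 c ≤ M)
    (hS : ∀ q ∈ S, LetterIndexed q.2) (ha : ∀ q ∈ S, S.card ≤ q.1 a) (hb : ∀ q ∈ S, q.1 b ≠ 0) :
    HasParikhDFA (S.card + S.card * ((Finset.Iic M).card + 1) + 2)
      (⋃ q ∈ S, linearSet q.1 q.2) := by
  let e := S.equivFin.symm
  let pre (i : Fin S.card) : Fin m → ℕ := Pi.single a i.1 + Pi.single b 1
  have hpre (i) : pre i ≤ (e i).1.1 := by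
    intro c
    have hi := i.2.le.trans (ha _ (e i).2)
    have hbi := Nat.one_le_iff_ne_zero.2 (hb _ (e i).2)
    by_cases hca : c = a
    · subst hca
      simpa [pre, hab] using hi
    · by_cases hcb : c = b
      · subst hcb
        simpa [pre, hca] using hbi
      · simp [pre, hca, hcb]
  convert hasParikhDFA_iUnion_vadd hab fun i => hasParikhDFA_linearSet (hS _ (e i).2)
    (tsub_le_self.trans (hSM _ (e i).2).1 : (e i).1.1 - pre i ≤ M) (hSM _ (e i).2).2
  have hlinear (i) : pre i +ᵥ linearSet ((e i).1.1 - pre i) (e i).1.2 =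
      linearSet (e i).1.1 (e i).1.2 := by
    rw [linearSet, ← add_vadd, add_tsub_cancel_of_le (hpre i), linearSet]
  simp only [pre] at hlinear ⊢
  simp only [hlinear]
  ext x
  simp only [Set.mem_iUnion, exists_prop]
  exact ⟨fun ⟨q, hq, hx⟩ => ⟨S.equivFin ⟨q, hq⟩, by simpa [e] using hx⟩,
    fun ⟨i, hx⟩ => ⟨_, (e i).2, hx⟩⟩

end Automata

section Induction

variable {m : ℕ}

/-- The pairs of an offset and letter-indexed periods with entries at most `M` and at most `d`
nonzero periods. -/
structure IsPiece (M d : ℕ) (q : (Fin m → ℕ) × (Fin m → Fin m → ℕ)) : Prop where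
  offset_le : ∀ a, q.1 a ≤ M
  period_le : ∀ c a, q.2 c a ≤ M
  letterIndexed : LetterIndexed q.2
  card_le : (Finset.univ.filter fun c => q.2 c ≠ 0).card ≤ d

/-- The number of pairs of an offset and periods with entries at most `M`. -/
def pieceCount (m M : ℕ) : ℕ := (M + 1) ^ m * ((M + 1) ^ m) ^ m

/-- A bound on the entries of an offset after each of the `m` periods has been added at most
`pieceCount m M` times. -/
def shiftBound (m M : ℕ) : ℕ := M + m * (pieceCount m M * M)

lemma le_shiftBound (m M : ℕ) : M ≤ shiftBound m M := Nat.le_add_right _ _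

variable {M d : ℕ} {q : (Fin m → ℕ) × (Fin m → Fin m → ℕ)}

lemma IsPiece.eq_zero (hq : IsPiece M 0 q) : q.2 = 0 := by
  simpa [funext_iff] using hq.card_le

lemma IsPiece.shift_le (hq : IsPiece M d q) (a : Fin m) :
    (q.1 + pieceCount m M • ∑ c, q.2 c) a ≤ shiftBound m M := by
  have hsum : ∑ c, q.2 c a ≤ m * M := by
    simpa using Finset.sum_le_card_nsmul Finset.univ _ M fun c _ => hq.period_le c a
  calc (q.1 + pieceCount m M • ∑ c, q.2 c) a = q.1 a + pieceCount m M * ∑ c, q.2 c a := by simp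
    _ ≤ M + pieceCount m M * (m * M) := by gcongr; exact hq.offset_le a
    _ = shiftBound m M := by rw [shiftBound, Nat.mul_left_comm]

lemma IsPiece.pieceCount_le_shift (hq : IsPiece M d q) {a : Fin m} (ha : q.2 a ≠ 0) :
    pieceCount m M ≤ (q.1 + pieceCount m M • ∑ c, q.2 c) a := by
  have hsum : 1 ≤ ∑ c, q.2 c a := (Nat.one_le_iff_ne_zero.2 (hq.letterIndexed a ha)).trans
    (Finset.single_le_sum (f := fun c => q.2 c a) (fun _ _ => Nat.zero_le _) (Finset.mem_univ a))
  calc pieceCount m M ≤ pieceCount m M * ∑ c, q.2 c a := Nat.le_mul_of_pos_right _ hsum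
    _ ≤ (q.1 + pieceCount m M • ∑ c, q.2 c) a := by simp

lemma IsPiece.of_eq_zero {d' : ℕ} (hq : IsPiece M d q) (h : q.2 = 0) :
    IsPiece (shiftBound m M) d' q where
  offset_le a := (hq.offset_le a).trans (le_shiftBound m M)
  period_le c a := (hq.period_le c a).trans (le_shiftBound m M)
  letterIndexed := hq.letterIndexed
  card_le := by simp [h]

lemma IsPiece.update (hq : IsPiece M (d + 1) q) {c : Fin m} (hc : q.2 c ≠ 0) {j : ℕ}
    (hj : j ≤ pieceCount m M) :
    IsPiece (shiftBound m M) d (q.1 + j • q.2 c, Function.update q.2 c 0) where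
  offset_le a := by
    calc (q.1 + j • q.2 c) a ≤ M + pieceCount m M * M :=
          add_le_add (hq.offset_le a) (Nat.mul_le_mul hj (hq.period_le c a))
      _ ≤ shiftBound m M := Nat.add_le_add_left (Nat.le_mul_of_pos_left _ c.pos) M
  period_le b a := by
    obtain rfl | hb := eq_or_ne b c
    · simp
    · simpa [hb] using (hq.period_le b a).trans (le_shiftBound m M)
  letterIndexed b := by
    obtain rfl | hb := eq_or_ne b c
    · simp
    · simpa [hb] using hq.letterIndexed b
  card_le := by
    have herase : (Finset.univ.filter fun b => Function.update q.2 c 0 b ≠ 0) =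
        (Finset.univ.filter fun b => q.2 b ≠ 0).erase c := by
      ext b
      obtain rfl | hb := eq_or_ne b c <;> simp [*]
    have := hq.card_le
    rw [herase, Finset.card_erase_of_mem (by simpa using hc)]
    omega

/-- A bound on the number of states that recognize the union of the pieces with entries at most
`M` whose offsets have been shifted. -/
def shiftStates (m M : ℕ) : ℕ :=
  pieceCount m M + pieceCount m M * ((shiftBound m M + 1) ^ m + 1) + 2

-- All periods, hence also the one at `a`, have been added as often as there are pieces. This makes
-- the offsets large at `a`.
lemma hasParikhDFA_biUnion_shift {a b : Fin m} (hab : a ≠ b)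
    {T : Set ((Fin m → ℕ) × (Fin m → Fin m → ℕ))}
    (hT : ∀ q ∈ T, IsPiece M d q ∧ q.2 a ≠ 0 ∧ q.1 b ≠ 0) :
    HasParikhDFA (shiftStates m M)
      (⋃ q ∈ T, linearSet (q.1 + pieceCount m M • ∑ c, q.2 c) q.2) := by
  classical
  have hbox : T ⊆ (Finset.Iic (fun _ => M, fun _ _ => M) :
      Finset ((Fin m → ℕ) × (Fin m → Fin m → ℕ))) := fun q hq =>
    Finset.mem_coe.2 (Finset.mem_Iic.2 ⟨(hT q hq).1.offset_le, (hT q hq).1.period_le⟩)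
  lift T to Finset ((Fin m → ℕ) × (Fin m → Fin m → ℕ)) using (Finset.finite_toSet _).subset hbox
  let S := T.image fun q => (q.1 + pieceCount m M • ∑ c, q.2 c, q.2)
  have hcard : S.card ≤ pieceCount m M :=
    calc S.card ≤ T.card := Finset.card_image_le
      _ ≤ _ := Finset.card_le_card (Finset.coe_subset.1 hbox)
      _ = pieceCount m M := by
        rw [← Finset.Iic_product_Iic, Finset.card_product]
        simp [pieceCount, Pi.card_Iic]
  have h := hasParikhDFA_biUnion_linearSet (S := S) (M := fun _ => shiftBound m M) hab
    (Finset.forall_mem_image.2 fun q hq => ⟨(hT q hq).1.shift_le,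
      fun c a => ((hT q hq).1.period_le c a).trans (le_shiftBound m M)⟩)
    (Finset.forall_mem_image.2 fun q hq => (hT q hq).1.letterIndexed)
    (Finset.forall_mem_image.2 fun q hq =>
      hcard.trans ((hT q hq).1.pieceCount_le_shift (hT q hq).2.1))
    (Finset.forall_mem_image.2 fun q hq => by simp [(hT q hq).2.2])
  rw [Finset.set_biUnion_finset_image] at h
  refine h.mono ?_
  simp only [Pi.card_Iic, Nat.card_Iic, Finset.prod_const, Finset.card_univ, Fintype.card_fin,
    shiftStates]
  gcongr

/-- Some DFA with at most `k` states has a Parikh image that is contained in `X` and contains the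
linear sets of all pieces in `X`. -/
def HasPieceCover (M d k : ℕ) (X : Set (Fin m → ℕ)) : Prop :=
  ∃ Y ⊆ X, HasParikhDFA k Y ∧
    ∀ q, IsPiece M d q → linearSet q.1 q.2 ⊆ X → linearSet q.1 q.2 ⊆ Y

variable {X : Set (Fin m → ℕ)}

lemma hasPieceCover_zero : HasPieceCover M 0 ((M + 1) ^ m + 1) X := by
  refine ⟨X ∩ Set.Iic fun _ => M, Set.inter_subset_left,
    (hasParikhDFA_of_subset_Iic Set.inter_subset_right).mono (by simp [Pi.card_Iic]),
    fun q hq hqX => Set.subset_inter hqX ?_⟩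
  rw [hq.eq_zero, linearSet_zero, Set.singleton_subset_iff]
  exact hq.offset_le

lemma exists_ne_and_offset_ne_zero (hX : ∀ x ∈ X, ∃ a b, a ≠ b ∧ x a ≠ 0 ∧ x b ≠ 0)
    {u : Fin m → ℕ} {P : Fin m → Fin m → ℕ} (huX : linearSet u P ⊆ X) (a : Fin m) :
    ∃ b, a ≠ b ∧ u b ≠ 0 := by
  obtain ⟨b, c, hbc, hb, hc⟩ := hX u (huX (mem_linearSet.2 ⟨0, zero_mem _, add_zero u⟩))
  obtain rfl | hab := eq_or_ne a b
  · exact ⟨c, hbc, hc⟩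
  · exact ⟨b, hab, hb⟩

lemma HasPieceCover.succ (hX : ∀ x ∈ X, ∃ a b, a ≠ b ∧ x a ≠ 0 ∧ x b ≠ 0) {k : ℕ}
    (h : HasPieceCover (shiftBound m M) d k X) : HasPieceCover M (d + 1)
      (k * shiftStates m M ^ Fintype.card {ab : Fin m × Fin m // ab.1 ≠ ab.2}) X := by
  obtain ⟨Y, hYX, hY, hcover⟩ := h
  let T (ab : {ab : Fin m × Fin m // ab.1 ≠ ab.2}) : Set ((Fin m → ℕ) × (Fin m → Fin m → ℕ)) :=
    {q | (IsPiece M (d + 1) q ∧ q.2 ab.1.1 ≠ 0 ∧ q.1 ab.1.2 ≠ 0) ∧ linearSet q.1 q.2 ⊆ X}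
  let Z : Option {ab : Fin m × Fin m // ab.1 ≠ ab.2} → Set (Fin m → ℕ) := fun o =>
    o.elim Y fun ab => ⋃ q ∈ T ab, linearSet (q.1 + pieceCount m M • ∑ c, q.2 c) q.2
  have hZ (o) : HasParikhDFA (o.elim k fun _ => shiftStates m M) (Z o) :=
    match o with
    | none => hY
    | some ab => hasParikhDFA_biUnion_shift ab.2 fun _ hq => hq.1
  refine ⟨⋃ o, Z o, Set.iUnion_subset fun o => ?_, ?_, fun q hq hqX x hx => ?_⟩
  · match o with
    | none => exact hYX
    | some _ => exact Set.iUnion₂_subset fun _ hq => (linearSet_shift_subset _ _ _).trans hq.2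
  · simpa [Fintype.prod_option] using HasParikhDFA.iUnion hZ
  · by_cases h0 : q.2 = 0
    · exact Set.mem_iUnion.2 ⟨none, hcover q (hq.of_eq_zero h0) hqX hx⟩
    obtain hx | ⟨c, hc, j, hj, hx⟩ :=
      mem_linearSet_shift_or_mem_linearSet_update hx (pieceCount m M)
    · obtain ⟨a, ha⟩ := Function.ne_iff.1 h0
      obtain ⟨b, hab, hb⟩ := exists_ne_and_offset_ne_zero hX hqX a
      exact Set.mem_iUnion.2
        ⟨some ⟨(a, b), hab⟩, Set.mem_iUnion₂.2 ⟨q, ⟨⟨hq, ha, hb⟩, hqX⟩, hx⟩⟩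
    · exact Set.mem_iUnion.2 ⟨none, hcover _ (hq.update hc hj.le)
        ((linearSet_update_subset _ _ _ _).trans hqX) hx⟩

lemma exists_polynomial_hasPieceCover (m d : ℕ) : ∃ p : Polynomial ℕ,
    ∀ (M : ℕ) (X : Set (Fin m → ℕ)), (∀ x ∈ X, ∃ a b, a ≠ b ∧ x a ≠ 0 ∧ x b ≠ 0) →
      HasPieceCover M d (p.eval M) X := by
  induction d with
  | zero => exact ⟨(.X + 1) ^ m + 1, fun M X _ => by simpa using hasPieceCover_zero⟩
  | succ d ih =>
    obtain ⟨p, hp⟩ := ih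
    let count : Polynomial ℕ := (.X + 1) ^ m * ((.X + 1) ^ m) ^ m
    let bound : Polynomial ℕ := .X + .C m * (count * .X)
    refine ⟨p.comp bound * (count + count * ((bound + 1) ^ m + 1) + 2) ^
      Fintype.card {ab : Fin m × Fin m // ab.1 ≠ ab.2}, fun M X hX => ?_⟩
    simpa [bound, count, shiftStates, shiftBound, pieceCount] using
      HasPieceCover.succ hX (hp (shiftBound m M) X hX)

end Induction

end ParikhDFA

/-- For every `m ≥ 1` there is a polynomial `p` such that every `n`-state
NFA (with `n ≥ 1`) over an alphabet of `m` letters accepting no unary word admits a Parikh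
equivalent DFA with at most `p(n)` states. -/
theorem nfa_to_parikh_equivalent_dfa_nonunary (m : ℕ) (hm : 1 ≤ m) :
    ∃ p : Polynomial ℕ,
      ∀ n : ℕ, 1 ≤ n →
      ∀ (σ : Type) [Fintype σ], Fintype.card σ = n →
      ∀ A : NFA (Fin m) σ, (∀ w ∈ A.accepts, ¬ IsUnaryWord w) →
      ∃ (σ' : Type) (_ : Fintype σ') (B : DFA (Fin m) σ'),
        Fintype.card σ' ≤ p.eval n ∧
        parikhImage B.accepts = parikhImage A.accepts := by
  obtain ⟨p, hp⟩ := ParikhDFA.exists_polynomial_hasPieceCover m m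
  let bound : Polynomial ℕ := .X * .X + (.X + 1) ^ m * (((.X + 1) ^ m * (.X + 1)) ^ m * .X)
  refine ⟨p.comp bound, ?_⟩
  rintro n - σ _ rfl A hA
  have hbound : bound.eval (Fintype.card σ) = ParikhDFA.offsetBound m (Fintype.card σ) := by
    simp [bound, ParikhDFA.offsetBound]
  have hcard : Fintype.card σ ≤ ParikhDFA.offsetBound m (Fintype.card σ) :=
    (Nat.le_mul_self _).trans (Nat.le_add_right _ _)
  have hnonunary : ∀ x ∈ parikhImage A.accepts, ∃ a b, a ≠ b ∧ x a ≠ 0 ∧ x b ≠ 0 := by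
    rintro _ ⟨w, hw, rfl⟩
    exact ParikhDFA.exists_ne_parikh_ne_zero (hA w hw)
  obtain ⟨Y, hYA, ⟨σ', _, B, hB, hBY⟩, hcover⟩ := hp _ _ hnonunary
  refine ⟨σ', ‹_›, B, by rwa [Polynomial.eval_comp, hbound], hBY.trans (hYA.antisymm ?_)⟩
  intro x hx
  obtain ⟨u, P, hu, hPn, hP, hxP, hPA⟩ := ParikhDFA.exists_linearSet_of_mem_parikhImage A hx
  exact hcover (u, P) ⟨hu, fun c a => (hPn c a).trans hcard, hP, by
    simpa using Finset.card_le_univ (Finset.univ.filter (fun c => P c ≠ 0))⟩ hPA hxP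
end

section
/- For every m ≥ 1 there exists a constant C > 0 such that for every n ≥ 2 and every nondeterministic finite automaton with n states over an alphabet Σ of m letters, there exists a deterministic finite automaton over Σ with at most e^{C·√(n·ln n)} states that is Parikh equivalent to it. -/
/-!
Vectors with only one nonzero entry and vectors with at least two are treated separately.

A long vector `k • e_a` in the Parikh image only depends on `k` modulo the lengths of the cycles of
the `a`-transitions. One cycle length per strongly connected component suffices, the shortest one.
These lengths are distinct after removing repetitions and sum to at most `n`, so by Landau's
argument their least common multiple is `exp (O(√(n ln n)))`, and a counter for each letter, with a
preperiod and this period, recognises all short and all unary vectors.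

Outside the unary vectors polynomially many linear sets with polynomially bounded data suffice.
Pumping cycles out of accepting runs gives linear sets with small offsets and with periods of weight
at most `n`. Subsets of periods can be exchanged until every remaining period `H d` is attached to
a letter `d` that occurs in it, which makes reading a sum of periods deterministic. The choice
between the linear sets is made deterministic as well: a long vector of such a set can absorb many
copies of a period into the offset, so a word may start with `a ^ (i + 1) * b`, where the length of
the first block encodes the index of the linear set; a second letter `b ≠ a` exists since the offset
is not unary.
-/

section Weight

variable {α : Type*} [Fintype α]

/-- The weight of a vector of letter counts is the sum of its entries, i.e. the length of any word
with these counts. -/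
def weight : (α → ℕ) →+ ℕ := ∑ a, Pi.evalAddMonoidHom (fun _ => ℕ) a

lemma weight_apply (v : α → ℕ) : weight v = ∑ a, v a := by
  simp [weight]

lemma weight_single [DecidableEq α] (a : α) (k : ℕ) : weight (Pi.single a k) = k := by
  simp [weight_apply]

lemma le_weight (v : α → ℕ) (a : α) : v a ≤ weight v := by
  rw [weight_apply]
  exact Finset.single_le_sum (fun _ _ => Nat.zero_le _) (Finset.mem_univ a)

lemma weight_eq_zero {v : α → ℕ} : weight v = 0 ↔ v = 0 := by
  simp [weight_apply, funext_iff]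

end Weight

section Parikh

variable {m : ℕ}

lemma parikh_nil : parikh ([] : List (Fin m)) = 0 := rfl

lemma parikh_append (u w : List (Fin m)) : parikh (u ++ w) = parikh u + parikh w := by
  funext i; simp [parikh]

lemma parikh_replicate (a : Fin m) (k : ℕ) : parikh (List.replicate k a) = Pi.single a k := by
  funext i
  by_cases h : i = a <;> simp [parikh, List.count_replicate, h, Ne.symm]

lemma parikh_cons (a : Fin m) (w : List (Fin m)) :
    parikh (a :: w) = Pi.single a 1 + parikh w := by
  rw [← List.singleton_append, parikh_append, ← List.replicate_one, parikh_replicate]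

lemma weight_parikh (w : List (Fin m)) : weight (parikh w) = w.length := by
  induction w with
  | nil => rw [parikh_nil, map_zero, List.length_nil]
  | cons a w ih => rw [parikh_cons, map_add, weight_single, ih, List.length_cons, add_comm]

lemma parikh_eq_single_iff {w : List (Fin m)} {a : Fin m} {k : ℕ} :
    parikh w = Pi.single a k ↔ w = List.replicate k a := by
  refine ⟨fun h => List.eq_replicate_iff.2 ⟨?_, fun b hb => ?_⟩,
    by rintro rfl; exact parikh_replicate a k⟩
  · rw [← weight_parikh, h, weight_single]
  · by_contra hba
    exact (List.count_pos_iff.2 hb).ne' (by simpa [parikh, hba] using congrFun h b)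

lemma parikh_surjective : Function.Surjective (parikh : List (Fin m) → Fin m → ℕ) := fun v => by
  rw [← Finset.univ_sum_single v]
  refine Finset.sum_induction _ (fun u => ∃ w, parikh w = u) ?_ ⟨[], parikh_nil⟩
    fun a _ => ⟨_, parikh_replicate a (v a)⟩
  rintro _ _ ⟨u, rfl⟩ ⟨w, rfl⟩
  exact ⟨u ++ w, parikh_append u w⟩

lemma parikhImage_add (L L' : Language (Fin m)) :
    parikhImage (L + L') = parikhImage L ∪ parikhImage L' := Set.image_union _ _ _

end Parikh

section LinearSet

open Pointwise

variable {M : Type*} [AddCommMonoid M] {c c' v : M} {G G' : Set M}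

/-- The linear set with offset `c` and set of periods `G`. -/
def linearSet (c : M) (G : Set M) : Set M := c +ᵥ (AddSubmonoid.closure G : Set M)

lemma mem_linearSet : v ∈ linearSet c G ↔ ∃ y ∈ AddSubmonoid.closure G, c + y = v := Iff.rfl

lemma offset_mem_linearSet : c ∈ linearSet c G := ⟨0, zero_mem _, add_zero c⟩

lemma add_mem_linearSet (hv : v ∈ linearSet c G) {y : M} (hy : y ∈ AddSubmonoid.closure G) :
    v + y ∈ linearSet c G := by
  obtain ⟨z, hz, rfl⟩ := mem_linearSet.1 hv
  exact ⟨z + y, add_mem hz hy, (add_assoc c z y).symm⟩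

lemma linearSet_subset (hc : c' ∈ linearSet c G) (hG : G' ⊆ AddSubmonoid.closure G) :
    linearSet c' G' ⊆ linearSet c G := by
  rintro _ ⟨y, hy, rfl⟩
  exact add_mem_linearSet hc ((AddSubmonoid.closure_le.2 hG) hy)

end LinearSet

section ParikhWalk

variable {α σ : Type*} [DecidableEq α] [DecidableEq σ]

/-- `ParikhWalk A p r v S` says that the NFA `A` has a walk from `p` to `r` whose set of visited
states is `S` and whose label has the letter counts `v`. -/
inductive ParikhWalk (A : NFA α σ) : σ → σ → (α → ℕ) → Finset σ → Prop
  | nil (p : σ) : ParikhWalk A p p 0 {p}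
  | cons {p q r : σ} {a : α} {v : α → ℕ} {S : Finset σ} (hq : q ∈ A.step p a)
      (h : ParikhWalk A q r v S) : ParikhWalk A p r (Pi.single a 1 + v) (insert p S)

variable {A : NFA α σ} {p q r : σ} {u v z : α → ℕ} {S T Z : Finset σ}

namespace ParikhWalk

lemma start_mem (h : ParikhWalk A p r v S) : p ∈ S := by
  cases h with
  | nil => exact Finset.mem_singleton_self p
  | cons => exact Finset.mem_insert_self ..

lemma append (h₁ : ParikhWalk A p q u S) (h₂ : ParikhWalk A q r v T) :
    ParikhWalk A p r (u + v) (S ∪ T) := by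
  induction h₁ with
  | nil p => rwa [zero_add, Finset.singleton_union, Finset.insert_eq_self.2 h₂.start_mem]
  | cons hq _ ih =>
    rw [add_assoc, Finset.insert_union]
    exact cons hq (ih h₂)

lemma split (h : ParikhWalk A p r v S) (hq : q ∈ S) :
    ∃ v₁ v₂ S₁ S₂, ParikhWalk A p q v₁ S₁ ∧ ParikhWalk A q r v₂ S₂ ∧ v = v₁ + v₂ ∧
      S = S₁ ∪ S₂ := by
  induction h with
  | nil p =>
    obtain rfl := Finset.mem_singleton.1 hq
    exact ⟨0, 0, {q}, {q}, nil q, nil q, (add_zero 0).symm, (Finset.union_self _).symm⟩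
  | @cons p p' r a v S hp h ih =>
    obtain rfl | hqS := Finset.mem_insert.1 hq
    · exact ⟨0, _, {q}, _, nil q, cons hp h, (zero_add _).symm,
        by rw [Finset.singleton_union, Finset.insert_idem]⟩
    · obtain ⟨v₁, v₂, S₁, S₂, h₁, h₂, rfl, rfl⟩ := ih hqS
      exact ⟨_, v₂, _, S₂, cons hp h₁, h₂, (add_assoc ..).symm, (Finset.insert_union ..).symm⟩

lemma insert_cycle (h : ParikhWalk A p r v S) (hq : q ∈ S) (hz : ParikhWalk A q q z Z) :
    ParikhWalk A p r (v + z) (S ∪ Z) := by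
  obtain ⟨v₁, v₂, S₁, S₂, h₁, h₂, rfl, rfl⟩ := h.split hq
  have := (h₁.append hz).append h₂
  rwa [add_right_comm, Finset.union_right_comm] at this

end ParikhWalk

variable [Fintype α] [Fintype σ]

/-- The letter counts of nonempty cycles of length at most the number of states that stay in `S`. -/
def shortCycles (A : NFA α σ) (S : Finset σ) : Set (α → ℕ) :=
  {z | z ≠ 0 ∧ weight z ≤ Fintype.card σ ∧ ∃ q ∈ S, ∃ Z ⊆ S, ParikhWalk A q q z Z}

lemma shortCycles_mono (A : NFA α σ) : Monotone (shortCycles A) :=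
  fun _ _ hST _ ⟨hz, hw, q, hq, Z, hZ, h⟩ => ⟨hz, hw, q, hST hq, Z, hZ.trans hST, h⟩

namespace ParikhWalk

lemma card_eq_or_exists_cycle (h : ParikhWalk A p r v S) :
    S.card = weight v + 1 ∨
      ∃ q u z T Z, ParikhWalk A p r u T ∧ q ∈ T ∧ ParikhWalk A q q z Z ∧ z ≠ 0 ∧
        weight z ≤ Fintype.card σ ∧ v = u + z ∧ S = T ∪ Z := by
  induction h with
  | nil p => exact .inl (by rw [map_zero, Finset.card_singleton])
  | @cons p p' r a v S hp h ih =>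
    obtain hS | ⟨q, u, z, T, Z, hT, hq, hZ, hz, hzw, rfl, rfl⟩ := ih
    · by_cases hpS : p ∈ S
      · obtain ⟨v₁, v₂, S₁, S₂, h₁, h₂, rfl, rfl⟩ := h.split hpS
        refine .inr ⟨p, v₂, Pi.single a 1 + v₁, S₂, insert p S₁, h₂, h₂.start_mem, cons hp h₁,
          fun h0 => ?_, ?_, by abel, by rw [Finset.union_insert, Finset.union_comm]⟩
        · simpa using congrFun h0 a
        · have := (S₁ ∪ S₂).card_le_univ
          rw [map_add] at hS ⊢
          rw [weight_single]
          omega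
      · left
        rw [Finset.card_insert_of_notMem hpS, hS, map_add, weight_single, add_comm 1]
    · exact .inr ⟨q, Pi.single a 1 + u, z, insert p T, Z, cons hp hT, Finset.mem_insert_of_mem hq,
        hZ, hz, hzw, (add_assoc ..).symm, (Finset.insert_union ..).symm⟩

lemma exists_short_base (h : ParikhWalk A p r v S) :
    ∃ c, ParikhWalk A p r c S ∧ weight c ≤ Fintype.card σ * S.card ∧
      v ∈ linearSet c (shortCycles A S) := by
  induction hk : weight v using Nat.strong_induction_on generalizing v S with
  | _ k ih =>
    subst hk
    obtain hS | ⟨q, u, z, T, Z, hT, hq, hZ, hz, hzw, rfl, rfl⟩ := h.card_eq_or_exists_cycle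
    · have hn : 0 < Fintype.card σ := Fintype.card_pos_iff.2 ⟨p⟩
      exact ⟨v, h, by nlinarith, offset_mem_linearSet⟩
    · have hlt : weight u < weight (u + z) := by
        rw [map_add]
        exact Nat.lt_add_of_pos_right (Nat.pos_of_ne_zero (weight_eq_zero.not.2 hz))
      obtain ⟨c, hc, hcw, huc⟩ := ih _ hlt hT rfl
      obtain ⟨y, hy, rfl⟩ := mem_linearSet.1 huc
      have hy' : y ∈ AddSubmonoid.closure (shortCycles A (T ∪ Z)) :=
        AddSubmonoid.closure_mono (shortCycles_mono A Finset.subset_union_left) hy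
      by_cases hZT : Z ⊆ T
      · rw [Finset.union_eq_left.2 hZT] at hy' ⊢
        have hz' : z ∈ shortCycles A T := ⟨hz, hzw, q, hq, Z, hZT, hZ⟩
        exact ⟨c, hc, hcw, add_mem_linearSet huc (AddSubmonoid.subset_closure hz')⟩
      · refine ⟨c + z, hc.insert_cycle hq hZ, ?_, y, hy', add_right_comm c z y⟩
        have hcard : T.card < (T ∪ Z).card := Finset.card_lt_card
          (Finset.subset_union_left.ssubset_of_ne fun h => hZT (Finset.union_eq_left.1 h.symm))
        rw [map_add]
        nlinarith

lemma of_mem_linearSet (h : ParikhWalk A p r u S) (hv : v ∈ linearSet u (shortCycles A S)) :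
    ParikhWalk A p r v S := by
  obtain ⟨y, hy, rfl⟩ := mem_linearSet.1 hv
  clear hv
  induction hy using AddSubmonoid.closure_induction generalizing u with
  | mem z hz =>
    obtain ⟨-, -, q, hq, Z, hZ, hz⟩ := hz
    simpa only [Finset.union_eq_left.2 hZ] using h.insert_cycle hq hz
  | zero => rwa [add_zero]
  | add y z _ _ ihy ihz =>
    rw [← add_assoc]
    exact ihz (ihy h)

end ParikhWalk

end ParikhWalk

section ParikhImage

variable {m : ℕ} {σ : Type*} [DecidableEq σ] {A : NFA (Fin m) σ} {p r : σ}

lemma ParikhWalk.exists_word {v : Fin m → ℕ} {S : Finset σ} (h : ParikhWalk A p r v S) :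
    ∃ w, parikh w = v ∧ r ∈ A.evalFrom {p} w := by
  induction h with
  | nil p => exact ⟨[], parikh_nil, Set.mem_singleton p⟩
  | @cons p q r a v S hq _ ih =>
    obtain ⟨w, rfl, hr⟩ := ih
    refine ⟨a :: w, parikh_cons a w, ?_⟩
    rw [NFA.evalFrom_cons, NFA.stepSet_singleton, NFA.mem_evalFrom_iff_exists]
    exact ⟨q, hq, hr⟩

lemma exists_parikhWalk_of_mem_evalFrom {w : List (Fin m)} (h : r ∈ A.evalFrom {p} w) :
    ∃ S, ParikhWalk A p r (parikh w) S := by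
  induction w generalizing p with
  | nil =>
    obtain rfl : r = p := h
    exact ⟨{r}, by rw [parikh_nil]; exact .nil r⟩
  | cons a w ih =>
    rw [NFA.evalFrom_cons, NFA.stepSet_singleton, NFA.mem_evalFrom_iff_exists] at h
    obtain ⟨q, hq, hr⟩ := h
    obtain ⟨S, hS⟩ := ih hr
    exact ⟨insert p S, by rw [parikh_cons]; exact .cons hq hS⟩

lemma mem_parikhImage_accepts_iff {v : Fin m → ℕ} :
    v ∈ parikhImage A.accepts ↔ ∃ p ∈ A.start, ∃ r ∈ A.accept, ∃ S, ParikhWalk A p r v S := by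
  constructor
  · rintro ⟨w, ⟨r, hr, hw⟩, rfl⟩
    obtain ⟨p, hp, hw⟩ := NFA.mem_evalFrom_iff_exists.1 hw
    exact ⟨p, hp, r, hr, exists_parikhWalk_of_mem_evalFrom hw⟩
  · rintro ⟨p, hp, r, hr, S, h⟩
    obtain ⟨w, rfl, hw⟩ := h.exists_word
    exact ⟨w, ⟨r, hr, NFA.mem_evalFrom_iff_exists.2 ⟨p, hp, hw⟩⟩, rfl⟩

end ParikhImage

lemma exists_linearSet_subset_parikhImage {m : ℕ} {σ : Type*} [Fintype σ] {A : NFA (Fin m) σ}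
    {v : Fin m → ℕ} (hv : v ∈ parikhImage A.accepts) :
    ∃ c G, v ∈ linearSet c G ∧ linearSet c G ⊆ parikhImage A.accepts ∧
      weight c ≤ Fintype.card σ ^ 2 ∧ ∀ g ∈ G, g ≠ 0 ∧ weight g ≤ Fintype.card σ := by
  classical
  obtain ⟨p, hp, r, hr, S, h⟩ := mem_parikhImage_accepts_iff.1 hv
  obtain ⟨c, hc, hcw, hvc⟩ := h.exists_short_base
  refine ⟨c, shortCycles A S, hvc, fun u hu => mem_parikhImage_accepts_iff.2
    ⟨p, hp, r, hr, S, hc.of_mem_linearSet hu⟩, hcw.trans ?_, fun g hg => ⟨hg.1, hg.2.1⟩⟩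
  rw [sq]
  exact Nat.mul_le_mul_left _ S.card_le_univ

section Exchange

variable {α ι : Type*} [Fintype ι] {g : ι → α → ℕ} {k : ι → ℕ} {v : α → ℕ}

/-- `k` has the largest sum of squares among the families of coefficients that express the same
vector in terms of `g`. -/
def IsSpread (g : ι → α → ℕ) (k : ι → ℕ) : Prop :=
  ∀ k' : ι → ℕ, ∑ i, k' i • g i = ∑ i, k i • g i → ∑ i, k' i ^ 2 ≤ ∑ i, k i ^ 2

lemma exists_isSpread (hg : ∀ i, g i ≠ 0) (hv : v ∈ AddSubmonoid.closure (Set.range g)) :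
    ∃ k, IsSpread g k ∧ ∑ i, k i • g i = v := by
  classical
  choose b hb using fun i => Function.ne_iff.1 (hg i)
  have hfin : {k : ι → ℕ | ∑ i, k i • g i = v}.Finite := by
    refine (Set.finite_Iic fun i => v (b i)).subset fun k (hk : _ = v) i => ?_
    subst hk
    simp only [Finset.sum_apply, Pi.smul_apply, smul_eq_mul]
    calc k i ≤ k i * g i (b i) := Nat.le_mul_of_pos_right _ (Nat.pos_of_ne_zero (hb i))
      _ ≤ ∑ j, k j * g j (b i) :=
          Finset.single_le_sum (f := fun j => k j * g j (b i)) (fun _ _ => Nat.zero_le _)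
            (Finset.mem_univ i)
  obtain ⟨k₀, hk₀⟩ := AddSubmonoid.mem_closure_range_iff_of_fintype.1 hv
  obtain ⟨k, hk, hmax⟩ := Set.exists_max_image _ (fun k => ∑ i, k i ^ 2) hfin ⟨k₀, hk₀.symm⟩
  exact ⟨k, fun k' hk' => hmax k' (hk'.trans hk), hk⟩

lemma IsSpread.eq_zero_of_relation (hk : IsSpread g k) {t : ι → ℤ} (ht : ∀ i, |t i| ≤ k i)
    (hrel : ∀ a, ∑ i, t i * g i a = 0) : t = 0 := by
  have shift (s : ι → ℤ) (hs : ∀ i, |s i| ≤ k i) (hrel : ∀ a, ∑ i, s i * g i a = 0) :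
      ∑ i, (k i + s i) ^ 2 ≤ ∑ i, (k i : ℤ) ^ 2 := by
    have hcast (i : ι) : ((k i + s i).toNat : ℤ) = k i + s i :=
      Int.toNat_of_nonneg (by linarith [neg_le_of_abs_le (hs i)])
    have hsq := hk (fun i => (k i + s i).toNat) <| by
      funext a
      zify
      simp only [Finset.sum_apply, Pi.smul_apply, smul_eq_mul, Nat.cast_sum, Nat.cast_mul, hcast,
        add_mul, Finset.sum_add_distrib, hrel, add_zero]
    zify at hsq
    simpa only [hcast] using hsq
  have hadd := shift t ht hrel
  have hsub := shift (-t) (by simpa using ht) (by simpa using hrel)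
  have hsum : ∑ i, t i ^ 2 = 0 := by
    refine le_antisymm ?_ (Finset.sum_nonneg fun i _ => sq_nonneg (t i))
    have hpar : ∑ i, (k i + t i) ^ 2 + ∑ i, (k i + (-t) i) ^ 2 =
        2 * ∑ i, (k i : ℤ) ^ 2 + 2 * ∑ i, t i ^ 2 := by
      simp only [Finset.mul_sum, ← Finset.sum_add_distrib, Pi.neg_apply]
      exact Finset.sum_congr rfl fun i _ => by ring
    linarith
  funext i
  exact pow_eq_zero_iff two_ne_zero |>.1
    ((Finset.sum_eq_zero_iff_of_nonneg fun i _ => sq_nonneg (t i)).1 hsum i (Finset.mem_univ i))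

attribute [local instance] Matrix.seminormedAddCommGroup in
lemma exists_small_relation [Fintype α] [Nonempty α] (hcard : Fintype.card α < Fintype.card ι)
    {n : ℕ} (hn : 1 ≤ n) (hg : ∀ i a, g i a ≤ n) :
    ∃ t : ι → ℤ, t ≠ 0 ∧ (∀ i, |t i| ≤ ((Fintype.card ι * n) ^ Fintype.card α : ℕ)) ∧
      ∀ a, ∑ i, t i * g i a = 0 := by
  let A : Matrix α ι ℤ := .of fun a i => (g i a : ℤ)
  obtain ⟨t, ht, hAt, htn⟩ :=
    Int.Matrix.exists_ne_zero_int_vec_norm_le A hcard Fintype.card_pos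
  refine ⟨t, ht, fun i => ?_, fun a => ?_⟩
  · have hA : max 1 ‖A‖ ≤ n := by
      refine max_le (by exact_mod_cast hn)
        ((Matrix.norm_le_iff (Nat.cast_nonneg n)).2 fun a i => ?_)
      simpa [A] using hg i a
    have hι : (1 : ℝ) ≤ Fintype.card ι := by exact_mod_cast (Nat.zero_le _).trans_lt hcard
    have hgap : (1 : ℝ) ≤ Fintype.card ι - Fintype.card α := by
      rw [le_sub_iff_add_le']
      exact_mod_cast hcard
    have : (|t i| : ℝ) ≤ (Fintype.card ι * n) ^ Fintype.card α :=
      calc (|t i| : ℝ) = ‖t i‖ := (Int.norm_eq_abs _).symm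
        _ ≤ ‖t‖ := norm_le_pi_norm t i
        _ ≤ _ := htn
        _ ≤ (Fintype.card ι * max 1 ‖A‖) ^ (Fintype.card α : ℝ) :=
            Real.rpow_le_rpow_of_exponent_le (one_le_mul_of_one_le_of_one_le hι (le_max_left ..))
              (div_le_self (Nat.cast_nonneg _) hgap)
        _ ≤ (Fintype.card ι * n) ^ Fintype.card α := by
            rw [Real.rpow_natCast]
            gcongr
    exact_mod_cast this
  · simpa [A, Matrix.mulVec, dotProduct, mul_comm] using congrFun hAt a

lemma IsSpread.eq_zero_of_relation_comp {κ : Type*} [Fintype κ] (hk : IsSpread g k) {e : κ → ι}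
    (he : e.Injective) {t : κ → ℤ} (ht : ∀ j, |t j| ≤ k (e j))
    (hrel : ∀ a, ∑ j, t j * g (e j) a = 0) : t = 0 := by
  have hext : Function.extend e t 0 = 0 := by
    refine hk.eq_zero_of_relation (fun i => ?_) fun a => ?_
    · by_cases hi : ∃ j, e j = i
      · obtain ⟨j, rfl⟩ := hi
        rw [he.extend_apply]
        exact ht j
      · rw [Function.extend_apply' _ _ _ hi, Pi.zero_apply, abs_zero]
        exact Int.natCast_nonneg _
    · rw [← Fintype.sum_of_injective e he (fun j => t j * (g (e j) a : ℤ)) _ (fun i hi => ?_)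
        fun j => by rw [he.extend_apply], hrel a]
      rw [Function.extend_apply' _ _ _ hi, Pi.zero_apply, zero_mul]
  funext j
  rw [← he.extend_apply t 0 j, hext, Pi.zero_apply, Pi.zero_apply]

lemma IsSpread.exists_injective [Fintype α] (hk : IsSpread g k) {n M : ℕ} (hg : ∀ i, g i ≠ 0)
    (hgn : ∀ i a, g i a ≤ n) (hM : (Fintype.card ι * n) ^ Fintype.card α ≤ M) :
    ∃ f : {i // M ≤ k i} → α, f.Injective ∧ ∀ i : {i // M ≤ k i}, g i (f i) ≠ 0 := by
  classical
  let supp (i : {i // M ≤ k i}) : Finset α := {a | g i a ≠ 0}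
  suffices hall : ∀ s : Finset {i // M ≤ k i}, s.card ≤ (s.biUnion supp).card by
    obtain ⟨f, hf, hfs⟩ := (Finset.all_card_le_biUnion_card_iff_exists_injective supp).1 hall
    exact ⟨f, hf, fun i => by simpa [supp] using hfs i⟩
  intro s
  by_contra! hlt
  obtain ⟨i₀, hi₀⟩ := Finset.card_pos.1 ((Nat.zero_le _).trans_lt hlt)
  obtain ⟨a₀, ha₀⟩ := Function.ne_iff.1 (hg i₀)
  have mem_supp {i} (hi : i ∈ s) {a} (ha : g i a ≠ 0) : a ∈ s.biUnion supp :=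
    Finset.mem_biUnion.2 ⟨i, hi, by simpa [supp] using ha⟩
  have : Nonempty (s.biUnion supp) := ⟨a₀, mem_supp hi₀ ha₀⟩
  have : Nonempty ι := ⟨i₀⟩
  have hn : 1 ≤ n := (Nat.one_le_iff_ne_zero.2 ha₀).trans (hgn i₀ a₀)
  have he : Function.Injective fun i : s => (i : ι) :=
    Subtype.val_injective.comp Subtype.val_injective
  have hs : Fintype.card s ≤ Fintype.card ι := Fintype.card_le_of_injective _ he
  have hexp : Fintype.card (s.biUnion supp) ≤ Fintype.card α := Fintype.card_subtype_le _
  obtain ⟨t, ht, htM, hrel⟩ := exists_small_relation (α := s.biUnion supp) (ι := s)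
    (g := fun i a => g i a) (by simpa only [Fintype.card_coe] using hlt) hn fun i a => hgn i a
  refine ht (hk.eq_zero_of_relation_comp he (fun i => (htM i).trans ?_) fun a => ?_)
  · refine Int.ofNat_le.2 (le_trans ?_ (hM.trans i.1.2))
    exact (Nat.pow_le_pow_left (Nat.mul_le_mul_right n hs) _).trans
      (Nat.pow_le_pow_right (Nat.mul_pos Fintype.card_pos hn) hexp)
  · by_cases ha : a ∈ s.biUnion supp
    · exact hrel ⟨a, ha⟩
    · refine Finset.sum_eq_zero fun i _ => ?_
      rw [not_not.1 (mt (mem_supp i.2) ha), Nat.cast_zero, mul_zero]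

end Exchange

/-- Each period indexed by a letter `d` is either absent (zero) or uses `d` itself. A
deterministic automaton can then tell from the next letter which period to apply. -/
def IsPivoted {α : Type*} (H : α → α → ℕ) : Prop := ∀ d, H d = 0 ∨ H d d ≠ 0

lemma exists_isPivoted_extension {α κ : Type*} {g : κ → α → ℕ} {f : κ → α} (hf : f.Injective)
    (hg : ∀ i, g i (f i) ≠ 0) :
    ∃ H, IsPivoted H ∧ Set.range g ⊆ Set.range H ∧ Set.range H ⊆ insert 0 (Set.range g) := by
  have hcases (d : α) : Function.extend f g 0 d = 0 ∨ ∃ i, f i = d := by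
    by_cases hd : ∃ i, f i = d
    · exact .inr hd
    · exact .inl (Function.extend_apply' _ _ _ hd)
  refine ⟨Function.extend f g 0, fun d => ?_, ?_, ?_⟩
  · obtain hd | ⟨i, rfl⟩ := hcases d
    · exact .inl hd
    · rw [hf.extend_apply]
      exact .inr (hg i)
  · rintro _ ⟨i, rfl⟩
    exact ⟨f i, hf.extend_apply ..⟩
  · rintro _ ⟨d, rfl⟩
    obtain hd | ⟨i, rfl⟩ := hcases d
    · exact .inl hd
    · exact .inr ⟨i, (hf.extend_apply ..).symm⟩

section LinearCover

variable {α : Type*} [Fintype α] {c v : α → ℕ} {G : Set (α → ℕ)} {n : ℕ}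

lemma exists_offset_ne_zero (hG : ∀ g ∈ G, weight g ≤ n) (hv : v ∈ linearSet c G) {b : α}
    (hb : v b ≠ 0) :
    ∃ c' ∈ linearSet c G, v ∈ linearSet c' G ∧ c ≤ c' ∧ c' b ≠ 0 ∧ weight c' ≤ weight c + n := by
  obtain ⟨y, hy, rfl⟩ := mem_linearSet.1 hv
  by_cases hc : c b = 0
  · have hyb : y b ≠ 0 := by simpa only [Pi.add_apply, hc, zero_add] using hb
    obtain ⟨g, hg, hgb, z, hz, rfl⟩ :
        ∃ g ∈ G, g b ≠ 0 ∧ ∃ z ∈ AddSubmonoid.closure G, g + z = y := by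
      clear hv hb
      induction hy using AddSubmonoid.closure_induction with
      | mem g hg => exact ⟨g, hg, hyb, 0, zero_mem _, add_zero g⟩
      | zero => exact absurd rfl hyb
      | add y z hy hz ihy ihz =>
        by_cases h : y b = 0
        · obtain ⟨g, hg, hgb, x, hx, rfl⟩ := ihz (by simpa [h] using hyb)
          exact ⟨g, hg, hgb, y + x, add_mem hy hx, add_left_comm g y x⟩
        · obtain ⟨g, hg, hgb, x, hx, rfl⟩ := ihy h
          exact ⟨g, hg, hgb, x + z, add_mem hx hz, (add_assoc g x z).symm⟩
    refine ⟨c + g, add_mem_linearSet offset_mem_linearSet (AddSubmonoid.subset_closure hg),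
      ⟨z, hz, add_assoc c g z⟩, le_self_add, by simp [hgb], ?_⟩
    rw [map_add]
    exact Nat.add_le_add_left (hG g hg) _
  · exact ⟨c, offset_mem_linearSet, hv, le_rfl, hc, Nat.le_add_right ..⟩

lemma exists_offset_support_nontrivial (hG : ∀ g ∈ G, weight g ≤ n) (hv : v ∈ linearSet c G)
    (hsupp : (Function.support v).Nontrivial) :
    ∃ c' ∈ linearSet c G, v ∈ linearSet c' G ∧ (Function.support c').Nontrivial ∧
      weight c' ≤ weight c + 2 * n := by
  obtain ⟨a, ha, b, hb, hab⟩ := hsupp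
  obtain ⟨c₁, hc₁, hv₁, -, hc₁a, hw₁⟩ := exists_offset_ne_zero hG hv ha
  obtain ⟨c₂, hc₂, hv₂, hle, hc₂b, hw₂⟩ := exists_offset_ne_zero hG hv₁ hb
  refine ⟨c₂, linearSet_subset hc₁ AddSubmonoid.subset_closure hc₂, hv₂, ⟨a, ?_, b, hc₂b, hab⟩,
    by omega⟩
  exact ((Nat.pos_of_ne_zero hc₁a).trans_le (hle a)).ne'

lemma exists_offset_add_nsmul {ι : Type*} [Fintype ι] {g : ι → α → ℕ} (hg : ∀ i, weight (g i) ≤ n)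
    (hv : v ∈ linearSet c (Set.range g)) {R : ℕ}
    (hlarge : weight c + Fintype.card ι * (R * n) < weight v) :
    ∃ j, g j ≠ 0 ∧ v ∈ linearSet (c + R • g j) (Set.range g) := by
  classical
  obtain ⟨y, hy, rfl⟩ := mem_linearSet.1 hv
  obtain ⟨k, rfl⟩ := AddSubmonoid.mem_closure_range_iff_of_fintype.1 hy
  obtain ⟨j, hj⟩ : ∃ j, R * n < weight (k j • g j) := by
    by_contra! hsmall
    have := Finset.sum_le_card_nsmul Finset.univ (fun j => weight (k j • g j)) _
      fun j _ => hsmall j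
    rw [map_add, map_sum] at hlarge
    rw [smul_eq_mul, Finset.card_univ] at this
    omega
  rw [map_nsmul, smul_eq_mul] at hj
  have hRk : R ≤ k j :=
    (Nat.lt_of_mul_lt_mul_right (hj.trans_le (Nat.mul_le_mul_left _ (hg j)))).le
  refine ⟨j, fun h0 => by simp [h0] at hj, mem_linearSet.2
    ⟨(k j - R) • g j + ∑ i ∈ Finset.univ.erase j, k i • g i, ?_, ?_⟩⟩
  · exact add_mem (nsmul_mem (AddSubmonoid.subset_closure (Set.mem_range_self j)) _)
      (sum_mem fun i _ => nsmul_mem (AddSubmonoid.subset_closure (Set.mem_range_self i)) _)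
  · rw [← Finset.add_sum_erase _ _ (Finset.mem_univ j), add_assoc c, ← add_assoc (R • g j),
      ← add_nsmul, Nat.add_sub_cancel' hRk]

lemma exists_isPivoted_of_range {ι : Type*} [Fintype ι] {g : ι → α → ℕ} (hg : ∀ i, g i ≠ 0)
    (hgn : ∀ i, weight (g i) ≤ n) {M : ℕ} (hM : (Fintype.card ι * n) ^ Fintype.card α ≤ M)
    (hv : v ∈ linearSet c (Set.range g)) :
    ∃ c' H, IsPivoted H ∧ (∀ d, weight (H d) ≤ n) ∧
      weight c' ≤ weight c + Fintype.card ι * (M * n) ∧ v ∈ linearSet c' (Set.range H) ∧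
      linearSet c' (Set.range H) ⊆ linearSet c (Set.range g) := by
  classical
  obtain ⟨y, hy, rfl⟩ := mem_linearSet.1 hv
  obtain ⟨k, hk, rfl⟩ := exists_isSpread hg hy
  obtain ⟨f, hf, hfg⟩ := hk.exists_injective hg (fun i a => (le_weight _ a).trans (hgn i)) hM
  obtain ⟨H, hpiv, hgH, hHg⟩ :=
    exists_isPivoted_extension (g := fun i : {i // M ≤ k i} => g i) hf hfg
  have hsmall : ∑ i : {i // ¬ M ≤ k i}, k i • g i ∈ AddSubmonoid.closure (Set.range g) :=
    sum_mem fun i _ => nsmul_mem (AddSubmonoid.subset_closure (Set.mem_range_self _)) _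
  have hlarge : ∑ i : {i // M ≤ k i}, k i • g i ∈ AddSubmonoid.closure (Set.range H) :=
    sum_mem fun i _ => nsmul_mem (AddSubmonoid.subset_closure (hgH (Set.mem_range_self i))) _
  refine ⟨c + ∑ i : {i // ¬ M ≤ k i}, k i • g i, H, hpiv, fun d => ?_, ?_,
    mem_linearSet.2 ⟨_, hlarge, ?_⟩,
    linearSet_subset (add_mem_linearSet offset_mem_linearSet hsmall) fun h hh => ?_⟩
  · obtain hd | ⟨i, hi⟩ := hHg (Set.mem_range_self d)
    · rw [hd, map_zero]
      exact Nat.zero_le n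
    · rw [← hi]
      exact hgn i
  · rw [map_add, map_sum]
    refine Nat.add_le_add_left ((Finset.sum_le_card_nsmul _ _ (M * n) fun i _ => ?_).trans ?_) _
    · rw [map_nsmul, smul_eq_mul]
      exact Nat.mul_le_mul (not_le.1 i.2).le (hgn i)
    · rw [smul_eq_mul, Finset.card_univ]
      exact Nat.mul_le_mul_right _ (Fintype.card_subtype_le _)
  · rw [add_assoc, add_comm (∑ _, _) (∑ _, _),
      Fintype.sum_subtype_add_sum_subtype (M ≤ k ·) fun i => k i • g i]
  · obtain rfl | ⟨i, rfl⟩ := hHg hh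
    · exact zero_mem _
    · exact AddSubmonoid.subset_closure (Set.mem_range_self _)

lemma exists_isPivoted (hG : ∀ g ∈ G, g ≠ 0 ∧ weight g ≤ n) (hv : v ∈ linearSet c G) :
    ∃ c' H, IsPivoted H ∧ (∀ d, weight (H d) ≤ n) ∧
      weight c' ≤ weight c + (n + 1) ^ Fintype.card α *
        (((n + 1) ^ Fintype.card α * n) ^ Fintype.card α * n) ∧
      v ∈ linearSet c' (Set.range H) ∧ linearSet c' (Set.range H) ⊆ linearSet c G := by
  classical
  have hbox : G ⊆ Finset.Iic (fun _ : α => n) := fun g hg =>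
    Finset.mem_coe.2 (Finset.mem_Iic.2 fun a => (le_weight g a).trans (hG g hg).2)
  have : Fintype G := ((Finset.finite_toSet _).subset hbox).fintype
  have hcard : Fintype.card G ≤ (n + 1) ^ Fintype.card α := by
    rw [← Set.toFinset_card]
    calc G.toFinset.card ≤ (Finset.Iic fun _ : α => n).card := by
          gcongr; simpa using hbox
      _ = (n + 1) ^ Fintype.card α := by simp [Pi.card_Iic]
  rw [← Subtype.range_coe (s := G)] at hv
  obtain ⟨c', H, hpiv, hHn, hc', hvH, hsub⟩ := exists_isPivoted_of_range
    (fun g : G => (hG g g.2).1) (fun g => (hG g g.2).2)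
    (Nat.pow_le_pow_left (Nat.mul_le_mul_right n hcard) _) hv
  rw [Subtype.range_coe] at hsub
  exact ⟨c', H, hpiv, hHn, hc'.trans (by gcongr), hvH, hsub⟩

end LinearCover

section WalkOfLength

open Relation (ReflTransGen)

variable {σ : Type*} {E : σ → σ → Prop} {d k l : ℕ} {p q r : σ}

/-- `WalkOfLength E k p q` says that the directed graph with edge relation `E` has a walk of
length `k` from `p` to `q`. -/
def WalkOfLength (E : σ → σ → Prop) : ℕ → σ → σ → Prop
  | 0, p, q => p = q
  | k + 1, p, q => ∃ r, E p r ∧ WalkOfLength E k r q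

namespace WalkOfLength

lemma trans (h : WalkOfLength E k p q) (h' : WalkOfLength E l q r) :
    WalkOfLength E (k + l) p r := by
  induction k generalizing p with
  | zero =>
    obtain rfl : p = q := h
    rwa [zero_add]
  | succ k ih =>
    obtain ⟨s, hs, h⟩ := h
    rw [Nat.succ_add]
    exact ⟨s, hs, ih h⟩

lemma repeat_cycle (h : WalkOfLength E k p p) (t : ℕ) : WalkOfLength E (t * k) p p := by
  induction t with
  | zero => rw [zero_mul]; exact rfl
  | succ t ih => rw [Nat.succ_mul]; exact ih.trans h

lemma reflTransGen (h : WalkOfLength E k p q) : ReflTransGen E p q := by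
  induction k generalizing p with
  | zero =>
    obtain rfl : p = q := h
    exact .refl
  | succ k ih =>
    obtain ⟨r, hr, h⟩ := h
    exact (ih h).head hr

lemma exists_of_reflTransGen (h : ReflTransGen E p q) : ∃ k, WalkOfLength E k p q := by
  induction h using ReflTransGen.head_induction_on with
  | refl => exact ⟨0, rfl⟩
  | head hr _ ih =>
    obtain ⟨k, hk⟩ := ih
    exact ⟨k + 1, _, hr, hk⟩

lemma exists_vertices (h : WalkOfLength E k p q) :
    ∃ f : ℕ → σ, f 0 = p ∧ f k = q ∧ ∀ i j, i + j ≤ k → WalkOfLength E j (f i) (f (i + j)) := by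
  induction k generalizing p with
  | zero =>
    refine ⟨fun _ => p, rfl, h, fun i j hij => ?_⟩
    obtain rfl : j = 0 := by omega
    rfl
  | succ k ih =>
    obtain ⟨r, hr, h⟩ := h
    obtain ⟨f, hf0, hfk, hf⟩ := ih h
    refine ⟨fun i => Nat.casesOn i p f, rfl, hfk, fun i j hij => ?_⟩
    match i, j with
    | i, 0 => rfl
    | 0, j + 1 =>
      have := hf 0 j (by omega)
      rw [hf0, zero_add] at this
      simpa only [zero_add] using ⟨r, hr, this⟩
    | i + 1, j + 1 => simpa only [Nat.succ_add] using hf i (j + 1) (by omega)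

variable [Fintype σ]

lemma exists_cycle (hk : Fintype.card σ * d ≤ k) (h : WalkOfLength E k p q) :
    ∃ s i c l, 1 ≤ c ∧ WalkOfLength E i p s ∧ WalkOfLength E (c * d) s s ∧ WalkOfLength E l s q ∧
      i + c * d + l = k := by
  obtain ⟨f, rfl, rfl, hf⟩ := h.exists_vertices
  obtain ⟨i, j, hne, hfij⟩ := Fintype.exists_ne_map_eq_of_card_lt
    (fun i : Fin (Fintype.card σ + 1) => f (i * d)) (by simp)
  wlog hij : i < j generalizing i j
  · exact this j i hne.symm hfij.symm (lt_of_le_of_ne (not_lt.1 hij) hne.symm)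
  obtain ⟨c, hc⟩ := Nat.exists_eq_add_of_lt (Fin.lt_def.1 hij)
  have hjd : i * d + (c + 1) * d = j * d := by rw [← add_mul, hc, add_assoc]
  have hjk : j * d ≤ k := (Nat.mul_le_mul_right d (Nat.lt_succ_iff.1 j.2)).trans hk
  refine ⟨f (i * d), i * d, c + 1, k - j * d, Nat.le_add_left .., ?_, ?_, ?_, by omega⟩
  · simpa only [zero_add] using hf 0 (i * d) (by omega)
  · have := hf (i * d) ((c + 1) * d) (by omega)
    rwa [hjd, ← hfij] at this
  · have := hf (j * d) (k - j * d) (by omega)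
    rwa [Nat.add_sub_cancel' hjk, ← hfij] at this

lemma exists_short_modEq (hd : 1 ≤ d) (h : WalkOfLength E k p q) :
    ∃ l < Fintype.card σ * d, l ≡ k [MOD d] ∧ WalkOfLength E l p q := by
  induction k using Nat.strong_induction_on with
  | _ k ih =>
    obtain hk | hk := lt_or_ge k (Fintype.card σ * d)
    · exact ⟨k, hk, rfl, h⟩
    · obtain ⟨s, i, c, j, hc, hi, -, hj, rfl⟩ := h.exists_cycle hk
      obtain ⟨l, hl, hmod, hw⟩ := ih (i + j) (by nlinarith) (hi.trans hj)
      refine ⟨l, hl, hmod.trans ?_, hw⟩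
      rw [add_right_comm]
      exact (Nat.modEq_iff_dvd' (Nat.le_add_right ..)).2 (by simp)

end WalkOfLength

/-- The length of a shortest nonempty cycle in the strongly connected component of `p`, and `0`
if there is none. -/
noncomputable def componentGirth (E : σ → σ → Prop) (p : σ) : ℕ :=
  sInf {d | 1 ≤ d ∧ ∃ q, AntisymmRel (ReflTransGen E) p q ∧ WalkOfLength E d q q}

lemma componentGirth_congr (h : AntisymmRel (ReflTransGen E) p q) :
    componentGirth E p = componentGirth E q := by
  have key (s : σ) : AntisymmRel (ReflTransGen E) p s ↔ AntisymmRel (ReflTransGen E) q s :=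
    ⟨h.symm.trans, h.trans⟩
  simp only [componentGirth, key]

lemma componentGirth_le (hd : 1 ≤ d) (hpq : AntisymmRel (ReflTransGen E) p q)
    (h : WalkOfLength E d q q) : componentGirth E p ≤ d :=
  Nat.sInf_le ⟨hd, q, hpq, h⟩

lemma exists_cycle_of_componentGirth_ne_zero (h : componentGirth E p ≠ 0) :
    ∃ q, AntisymmRel (ReflTransGen E) p q ∧ WalkOfLength E (componentGirth E p) q q :=
  (Nat.sInf_mem (Nat.nonempty_of_pos_sInf (Nat.pos_of_ne_zero h))).2

lemma componentGirth_ne_zero (hd : 1 ≤ d) (h : WalkOfLength E d p p) : componentGirth E p ≠ 0 :=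
  Nat.one_le_iff_ne_zero.1 (Nat.sInf_mem (s := {d | 1 ≤ d ∧ ∃ q, AntisymmRel (ReflTransGen E) p q ∧
    WalkOfLength E d q q}) ⟨d, hd, p, .refl _ p, h⟩).1

variable [Fintype σ]

lemma componentGirth_le_card (E : σ → σ → Prop) (p : σ) :
    componentGirth E p ≤ ({q | componentGirth E q = componentGirth E p} : Finset σ).card := by
  obtain h | h := eq_or_ne (componentGirth E p) 0
  · exact h ▸ Nat.zero_le _
  obtain ⟨q, hpq, hcyc⟩ := exists_cycle_of_componentGirth_ne_zero h
  obtain ⟨f, rfl, hfd, hf⟩ := hcyc.exists_vertices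
  have hto {i} (hi : i ≤ componentGirth E p) : WalkOfLength E i (f 0) (f i) := by
    simpa only [zero_add] using hf 0 i (by omega)
  have hfrom {i} (hi : i ≤ componentGirth E p) :
      WalkOfLength E (componentGirth E p - i) (f i) (f 0) := by
    simpa only [Nat.add_sub_cancel' hi, hfd] using hf i (componentGirth E p - i) (by omega)
  have hinj : Set.InjOn f (Finset.range (componentGirth E p)) := by
    intro i hi j hj hij
    rw [Finset.coe_range, Set.mem_Iio] at hi hj
    by_contra hne
    wlog hlt : i < j generalizing i j
    · exact this hj hi hij.symm (Ne.symm hne) (by omega)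
    have hshort := (hto hi.le).trans (hij ▸ hfrom hj.le)
    have := componentGirth_le (by omega) hpq hshort
    omega
  conv_lhs => rw [← Finset.card_range (componentGirth E p)]
  refine Finset.card_le_card_of_injOn f (fun i hi => ?_) hinj
  have hi := (Finset.mem_range.1 hi).le
  have hpi : AntisymmRel (ReflTransGen E) p (f i) :=
    hpq.trans ⟨(hto hi).reflTransGen, (hfrom hi).reflTransGen⟩
  simp [componentGirth_congr hpi]

/-- The girths of the strongly connected components that contain a cycle. Multiples of these
numbers serve as periods of long walks. -/
noncomputable def cyclePeriods (E : σ → σ → Prop) : Finset ℕ :=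
  (Finset.univ.image (componentGirth E)).erase 0

lemma ne_zero_of_mem_cyclePeriods {E : σ → σ → Prop} {d : ℕ} (hd : d ∈ cyclePeriods E) : d ≠ 0 :=
  Finset.ne_of_mem_erase hd

lemma sum_cyclePeriods_le (E : σ → σ → Prop) : ∑ d ∈ cyclePeriods E, d ≤ Fintype.card σ := by
  classical
  calc ∑ d ∈ cyclePeriods E, d
      ≤ ∑ d ∈ Finset.univ.image (componentGirth E), d :=
        Finset.sum_le_sum_of_subset (Finset.erase_subset ..)
    _ ≤ ∑ d ∈ Finset.univ.image (componentGirth E),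
          ({q | componentGirth E q = d} : Finset σ).card := by
        refine Finset.sum_le_sum fun d hd => ?_
        obtain ⟨p, -, rfl⟩ := Finset.mem_image.1 hd
        exact componentGirth_le_card E p
    _ = Fintype.card σ :=
        (Finset.card_eq_sum_card_image (componentGirth E) Finset.univ).symm

lemma WalkOfLength.exists_periodic (hk : Fintype.card σ ≤ k) (h : WalkOfLength E k p q) :
    ∃ d ∈ cyclePeriods E, ∃ l ≤ 4 * Fintype.card σ ^ 2, l ≡ k [MOD d] ∧
      ∀ t, WalkOfLength E (l + t * d) p q := by
  obtain ⟨s, i, c, j, hc, hi, hs, hj, rfl⟩ := h.exists_cycle (d := 1) (by omega)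
  have hd := componentGirth_ne_zero (by omega) hs
  obtain ⟨q₀, ⟨hsq, hqs⟩, hq₀⟩ := exists_cycle_of_componentGirth_ne_zero hd
  have hdn : componentGirth E s ≤ Fintype.card σ :=
    (componentGirth_le_card E s).trans (Finset.card_le_univ _)
  have hmem : componentGirth E s ∈ cyclePeriods E :=
    Finset.mem_erase.2 ⟨hd, Finset.mem_image_of_mem _ (Finset.mem_univ s)⟩
  obtain ⟨e₁, he₁⟩ := WalkOfLength.exists_of_reflTransGen hsq
  obtain ⟨e₂, he₂⟩ := WalkOfLength.exists_of_reflTransGen hqs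
  obtain ⟨e₁, hlt₁, -, he₁⟩ := he₁.exists_short_modEq le_rfl
  obtain ⟨e₂, hlt₂, -, he₂⟩ := he₂.exists_short_modEq le_rfl
  obtain ⟨a, ha, hai, hpa⟩ := hi.exists_short_modEq (Nat.pos_of_ne_zero hd)
  obtain ⟨b, hb, hbj, hbq⟩ := (hs.trans hj).exists_short_modEq (Nat.pos_of_ne_zero hd)
  set g := componentGirth E s
  refine ⟨g, hmem, a + g * (e₁ + e₂) + b, ?_, ?_, fun t => ?_⟩
  · have := Nat.mul_le_mul_left (Fintype.card σ) hdn
    have : g * (e₁ + e₂) ≤ Fintype.card σ * (2 * Fintype.card σ) :=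
      Nat.mul_le_mul hdn (by omega)
    nlinarith
  · rw [add_assoc i]
    refine Nat.ModEq.add ?_ hbj
    simpa [Nat.ModEq] using hai
  · -- The return trips, repeated `g` times in total, do not change the length modulo `g`.
    have hloop : WalkOfLength E ((g - 1) * (e₁ + e₂)) s s := (he₁.trans he₂).repeat_cycle _
    have hw := (((hpa.trans he₁).trans (hq₀.repeat_cycle t)).trans he₂).trans (hloop.trans hbq)
    convert hw using 1
    obtain ⟨g', hg'⟩ := Nat.exists_eq_add_of_lt (Nat.pos_of_ne_zero hd)
    rw [zero_add] at hg'
    rw [hg', Nat.add_sub_cancel]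
    ring

lemma WalkOfLength.of_modEq {L : ℕ} (hL : ∀ d ∈ cyclePeriods E, d ∣ L)
    (hk : 4 * Fintype.card σ ^ 2 ≤ k) (hl : 4 * Fintype.card σ ^ 2 ≤ l) (hkl : k ≡ l [MOD L])
    (h : WalkOfLength E k p q) : WalkOfLength E l p q := by
  obtain ⟨d, hd, j, hj, hjk, hw⟩ := h.exists_periodic (by nlinarith)
  have hjl : j ≤ l := hj.trans hl
  obtain ⟨t, ht⟩ := (Nat.modEq_iff_dvd' hjl).1 (hjk.trans (hkl.of_dvd (hL d hd)))
  have := hw t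
  rwa [mul_comm, ← ht, Nat.add_sub_cancel' hjl] at this

end WalkOfLength

section Unary

variable {m : ℕ} {σ : Type*} {A : NFA (Fin m) σ} {a : Fin m} {k l : ℕ}

lemma mem_evalFrom_replicate_iff {p r : σ} :
    r ∈ A.evalFrom {p} (List.replicate k a) ↔ WalkOfLength (fun p q => q ∈ A.step p a) k p r := by
  induction k generalizing p with
  | zero => exact eq_comm
  | succ k ih =>
    rw [List.replicate_succ, NFA.evalFrom_cons, NFA.stepSet_singleton, NFA.mem_evalFrom_iff_exists]
    simp only [ih, WalkOfLength]

lemma single_mem_parikhImage_iff {L : Language (Fin m)} :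
    Pi.single a k ∈ parikhImage L ↔ List.replicate k a ∈ L := by
  change (∃ w ∈ L, parikh w = Pi.single a k) ↔ _
  simp only [parikh_eq_single_iff, exists_eq_right]

lemma single_mem_parikhImage_accepts_iff :
    Pi.single a k ∈ parikhImage A.accepts ↔
      ∃ r ∈ A.accept, ∃ p ∈ A.start, WalkOfLength (fun p q => q ∈ A.step p a) k p r := by
  simp only [← mem_evalFrom_replicate_iff, ← NFA.mem_evalFrom_iff_exists,
    single_mem_parikhImage_iff]
  rfl

lemma single_mem_parikhImage_accepts_of_modEq [Fintype σ] {L : ℕ}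
    (hL : ∀ d ∈ cyclePeriods fun p q => q ∈ A.step p a, d ∣ L)
    (hk : 4 * Fintype.card σ ^ 2 ≤ k) (hl : 4 * Fintype.card σ ^ 2 ≤ l) (hkl : k ≡ l [MOD L])
    (h : Pi.single a k ∈ parikhImage A.accepts) : Pi.single a l ∈ parikhImage A.accepts := by
  obtain ⟨r, hr, p, hp, hw⟩ := single_mem_parikhImage_accepts_iff.1 h
  exact single_mem_parikhImage_accepts_iff.2 ⟨r, hr, p, hp, hw.of_modEq hL hk hl hkl⟩

end Unary

section Landau

variable {D : Finset ℕ} {n T : ℕ}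

lemma lcm_le_pow_card_primeFactors (h0 : ∀ d ∈ D, d ≠ 0) (hn : ∀ d ∈ D, d ≤ n) :
    D.lcm id ≤ n ^ (D.lcm id).primeFactors.card := by
  have hL : D.lcm id ≠ 0 := Finset.lcm_ne_zero_iff.2 h0
  conv_lhs => rw [← Nat.prod_factorization_pow_eq_self hL]
  rw [Finsupp.prod, Nat.support_factorization]
  refine Finset.prod_le_pow_card _ _ _ fun p hp => ?_
  have hD : D.Nonempty := Finset.nonempty_iff_ne_empty.2 (by rintro rfl; simp at hp)
  obtain ⟨d, hd, hpd⟩ := D.exists_mem_eq_sup hD fun d => d.factorization p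
  calc p ^ (D.lcm id).factorization p = p ^ d.factorization p := by
        rw [Finset.factorization_lcm (f := id) h0]; exact congrArg _ hpd
    _ ≤ d := Nat.ordProj_le p (h0 d hd)
    _ ≤ n := hn d hd

lemma card_large_primeFactors_lcm_mul_le (h0 : ∀ d ∈ D, d ≠ 0) (hT : n ≤ T * T)
    (hsum : ∑ d ∈ D, d ≤ n) :
    ((D.lcm id).primeFactors.filter (T < ·)).card * T ≤ n := by
  have exists_dvd (p) (hp : p ∈ (D.lcm id).primeFactors.filter (T < ·)) : ∃ d ∈ D, p ∣ d := by
    have hp := (Finset.mem_filter.1 hp).1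
    exact (Nat.prime_of_mem_primeFactors hp).prime.exists_mem_finset_dvd
      ((Nat.dvd_of_mem_primeFactors hp).trans (D.lcm_dvd_prod id))
  choose! f hfD hpf using exists_dvd
  have hinj : Set.InjOn f ((D.lcm id).primeFactors.filter (T < ·)) := fun p hp q hq hpq => by
    rw [Finset.mem_coe] at hp hq
    by_contra hne
    have hcop : p.Coprime q := (Nat.coprime_primes
      (Nat.prime_of_mem_primeFactors (Finset.mem_filter.1 hp).1)
      (Nat.prime_of_mem_primeFactors (Finset.mem_filter.1 hq).1)).2 hne
    have hpq : p * q ≤ f p := Nat.le_of_dvd (Nat.pos_of_ne_zero (h0 _ (hfD p hp)))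
      (hcop.mul_dvd_of_dvd_of_dvd (hpf p hp) (hpq ▸ hpf q hq))
    have hfp : f p ≤ n := (Finset.single_le_sum (f := fun d => d) (fun _ _ => Nat.zero_le _)
      (hfD p hp)).trans hsum
    have := Nat.mul_lt_mul'' (Finset.mem_filter.1 hp).2 (Finset.mem_filter.1 hq).2
    omega
  rw [← Finset.card_image_of_injOn hinj]
  refine (Finset.card_nsmul_le_sum _ (fun d => d) T fun d hd => ?_).trans
    ((Finset.sum_le_sum_of_subset (Finset.image_subset_iff.2 hfD)).trans hsum)
  obtain ⟨p, hp, rfl⟩ := Finset.mem_image.1 hd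
  exact (Finset.mem_filter.1 hp).2.le.trans
    (Nat.le_of_dvd (Nat.pos_of_ne_zero (h0 _ (hfD p hp))) (hpf p hp))

lemma lcm_le_pow_primeCounting (hn : 1 ≤ n) (hT : n ≤ T * T) (h0 : ∀ d ∈ D, d ≠ 0)
    (hsum : ∑ d ∈ D, d ≤ n) : D.lcm id ≤ n ^ (Nat.primeCounting T + n / T) := by
  have hdn (d) (hd : d ∈ D) : d ≤ n :=
    (Finset.single_le_sum (f := fun d => d) (fun _ _ => Nat.zero_le _) hd).trans hsum
  refine (lcm_le_pow_card_primeFactors h0 hdn).trans (Nat.pow_le_pow_right hn ?_)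
  rw [← Finset.card_filter_add_card_filter_not (· ≤ T)]
  gcongr
  · rw [Nat.primeCounting, ← Nat.primesBelow_card_eq_primeCounting']
    refine Finset.card_le_card fun p hp => ?_
    obtain ⟨hp, hpT⟩ := Finset.mem_filter.1 hp
    exact Nat.mem_primesBelow.2 ⟨Nat.lt_succ_of_le hpT, Nat.prime_of_mem_primeFactors hp⟩
  · simp only [not_le]
    exact (Nat.le_div_iff_mul_le (by nlinarith)).2
      (card_large_primeFactors_lcm_mul_le h0 hT hsum)

end Landau

section Growth

/-- `√(n ln n)`, the order of the logarithm of Landau's function `g(n)`, the largest order of a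
permutation of `n` points. -/
noncomputable def landauExponent (n : ℕ) : ℝ := √(n * Real.log n)

/-- `f n ≤ exp (C * √(n ln n))` for some constant `C` and all `n ≥ 2`. -/
def IsLandauBounded (f : ℕ → ℕ) : Prop :=
  ∃ C : ℝ, 0 ≤ C ∧ ∀ n : ℕ, 2 ≤ n → (f n : ℝ) ≤ Real.exp (C * landauExponent n)

variable {n : ℕ} {f g : ℕ → ℕ}

lemma landauExponent_nonneg (n : ℕ) : 0 ≤ landauExponent n := Real.sqrt_nonneg _

lemma sq_landauExponent (n : ℕ) : landauExponent n ^ 2 = n * Real.log n :=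
  Real.sq_sqrt (mul_nonneg (Nat.cast_nonneg n) (Real.log_natCast_nonneg n))

lemma half_lt_log (hn : 2 ≤ n) : 1 / 2 < Real.log n := by
  have := Real.log_two_gt_d9
  have : Real.log 2 ≤ Real.log n := Real.log_le_log two_pos (by exact_mod_cast hn)
  linarith

lemma natCast_le_landauExponent (hn : 2 ≤ n) : (n : ℝ) ≤ 2 * landauExponent n ^ 2 := by
  have := half_lt_log hn
  rw [sq_landauExponent]
  nlinarith [Nat.cast_nonneg (α := ℝ) n]

lemma one_le_landauExponent (hn : 2 ≤ n) : 1 ≤ landauExponent n := by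
  have : (2 : ℝ) ≤ n := by exact_mod_cast hn
  nlinarith [natCast_le_landauExponent hn, landauExponent_nonneg n]

lemma log_le_landauExponent (n : ℕ) : Real.log n ≤ landauExponent n := by
  refine Real.le_sqrt_of_sq_le ?_
  rw [sq]
  exact mul_le_mul_of_nonneg_right (Real.log_le_self n.cast_nonneg) (Real.log_natCast_nonneg n)

namespace IsLandauBounded

lemma mul (hf : IsLandauBounded f) (hg : IsLandauBounded g) :
    IsLandauBounded fun n => f n * g n := by
  obtain ⟨C, hC, hf⟩ := hf
  obtain ⟨C', hC', hg⟩ := hg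
  refine ⟨C + C', by positivity, fun n hn => ?_⟩
  rw [add_mul, Real.exp_add, Nat.cast_mul]
  exact mul_le_mul (hf n hn) (hg n hn) (Nat.cast_nonneg _) (Real.exp_nonneg _)

lemma const (k : ℕ) : IsLandauBounded fun _ => k := by
  refine ⟨k, Nat.cast_nonneg k, fun n hn => ?_⟩
  have := Real.add_one_le_exp (k * landauExponent n)
  nlinarith [one_le_landauExponent hn, Nat.cast_nonneg (α := ℝ) k]

lemma pow (hf : IsLandauBounded f) (k : ℕ) : IsLandauBounded fun n => f n ^ k := by
  induction k with
  | zero => simpa only [pow_zero] using const 1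
  | succ k ih => simpa only [pow_succ] using ih.mul hf

lemma id : IsLandauBounded fun n => n := by
  refine ⟨1, zero_le_one, fun n hn => ?_⟩
  rw [one_mul, ← Real.log_le_iff_le_exp (by positivity)]
  exact log_le_landauExponent n

lemma add (hf : IsLandauBounded f) (hg : IsLandauBounded g) :
    IsLandauBounded fun n => f n + g n := by
  obtain ⟨C, hC, hf⟩ := hf
  obtain ⟨C', hC', hg⟩ := hg
  refine ⟨1 + (C + C'), by positivity, fun n hn => ?_⟩
  set x := landauExponent n
  have hx : 1 ≤ x := one_le_landauExponent hn
  rw [Nat.cast_add]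
  calc (f n + g n : ℝ) ≤ Real.exp (C * x) + Real.exp (C' * x) := add_le_add (hf n hn) (hg n hn)
    _ ≤ Real.exp ((C + C') * x) + Real.exp ((C + C') * x) := by gcongr <;> linarith
    _ = 2 * Real.exp ((C + C') * x) := (two_mul _).symm
    _ ≤ Real.exp x * Real.exp ((C + C') * x) := by
        gcongr
        linarith [Real.add_one_le_exp x]
    _ = Real.exp ((1 + (C + C')) * x) := by rw [← Real.exp_add]; ring_nf

end IsLandauBounded

lemma log_le_two_mul_sqrt {x : ℝ} (hx : 0 < x) : Real.log x ≤ 2 * √x := by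
  have := Real.log_le_self (Real.sqrt_nonneg x)
  rw [Real.log_sqrt hx.le] at this
  linarith

lemma primeCounting_floor_mul_log_le {x : ℝ} (hx : 1 < x) :
    Nat.primeCounting ⌊x⌋₊ * Real.log x ≤ 6 * x := by
  have hlog : 0 < Real.log x := Real.log_pos hx
  have hlog4 : Real.log 4 ≤ 2 := by
    rw [show (4 : ℝ) = 2 ^ 2 by norm_num, Real.log_pow]
    norm_num
    linarith [Real.log_two_lt_d9]
  have hpi := Chebyshev.pi_le_log4_mul_div hx
  rw [Real.log_sqrt (by linarith)] at hpi
  calc Nat.primeCounting ⌊x⌋₊ * Real.log x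
      ≤ (Real.log 4 * x / (Real.log x / 2) + √x) * Real.log x := by gcongr
    _ = 2 * Real.log 4 * x + √x * Real.log x := by field_simp
    _ ≤ 2 * 2 * x + √x * (2 * √x) := by
        gcongr
        exact log_le_two_mul_sqrt (by linarith)
    _ = 6 * x := by linear_combination 2 * Real.mul_self_sqrt (show 0 ≤ x by linarith)

/-- The prime size that balances the contributions of small and large primes in
`lcm_le_pow_primeCounting`. -/
noncomputable def landauThreshold (n : ℕ) : ℕ := ⌊3 * landauExponent n⌋₊

/-- An upper bound for the least common multiple of distinct positive integers with sum at
most `n`. -/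
noncomputable def landauBound (n : ℕ) : ℕ :=
  n ^ (Nat.primeCounting (landauThreshold n) + n / landauThreshold n)

lemma two_mul_landauExponent_le (hn : 2 ≤ n) : 2 * landauExponent n ≤ landauThreshold n := by
  have := Nat.lt_floor_add_one (3 * landauExponent n)
  rw [landauThreshold]
  linarith [one_le_landauExponent hn]

lemma lcm_le_landauBound {D : Finset ℕ} (hn : 2 ≤ n) (h0 : ∀ d ∈ D, d ≠ 0)
    (hsum : ∑ d ∈ D, d ≤ n) : D.lcm id ≤ landauBound n := by
  refine lcm_le_pow_primeCounting (by omega) ?_ h0 hsum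
  have : (n : ℝ) ≤ landauThreshold n * landauThreshold n := by
    nlinarith [two_mul_landauExponent_le hn, natCast_le_landauExponent hn,
      one_le_landauExponent hn]
  exact_mod_cast this

lemma IsLandauBounded.landauBound : IsLandauBounded landauBound := by
  refine ⟨37, by norm_num, fun n hn => ?_⟩
  have hX := one_le_landauExponent hn
  have hT := two_mul_landauExponent_le hn
  have hlog : 0 < Real.log n := one_half_pos.trans (half_lt_log hn)
  have hsmall : Nat.primeCounting (landauThreshold n) * Real.log n ≤ 36 * landauExponent n := by
    have hnX : Real.log n ≤ 2 * Real.log (3 * landauExponent n) := by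
      rw [← Nat.cast_two, ← Real.log_pow]
      refine Real.log_le_log (by positivity) ?_
      nlinarith [natCast_le_landauExponent hn]
    have := primeCounting_floor_mul_log_le (x := 3 * landauExponent n) (by linarith)
    have := mul_le_mul_of_nonneg_left hnX
      (Nat.cast_nonneg (α := ℝ) (Nat.primeCounting (landauThreshold n)))
    rw [landauThreshold] at *
    linarith
  have hlarge : ((n / landauThreshold n : ℕ) : ℝ) * Real.log n ≤ landauExponent n := by
    calc ((n / landauThreshold n : ℕ) : ℝ) * Real.log n
        ≤ n / landauExponent n * Real.log n := by
          gcongr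
          exact Nat.cast_div_le.trans (by gcongr; linarith)
      _ = landauExponent n := by
          rw [div_mul_eq_mul_div, ← sq_landauExponent]
          field_simp
  rw [_root_.landauBound, Nat.cast_pow, ← Real.log_le_iff_le_exp (by positivity), Real.log_pow,
    Nat.cast_add, add_mul]
  linarith

end Growth

section Lasso

variable {T L x : ℕ} [NeZero L]

/-- The quotient map of `ℕ` by the congruence that is trivial below `T` and congruence modulo `L`
from `T` on, with values in the set of least representatives. -/
def lasso (T L : ℕ) [NeZero L] (x : ℕ) : Fin (T + L) :=
  ⟨if x < T then x else T + (x - T) % L, by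
    have := Nat.mod_lt (x - T) (NeZero.pos L)
    split_ifs <;> omega⟩

lemma val_lasso_of_lt (hx : x < T) : (lasso T L x : ℕ) = x := if_pos hx

lemma val_lasso_of_le (hx : T ≤ x) : (lasso T L x : ℕ) = T + (x - T) % L := if_neg hx.not_gt

lemma le_val_lasso (hx : T ≤ x) : T ≤ lasso T L x := by
  rw [val_lasso_of_le hx]
  exact Nat.le_add_right _ _

lemma val_lasso_modEq (T L x : ℕ) [NeZero L] : (lasso T L x : ℕ) ≡ x [MOD L] := by
  rcases lt_or_ge x T with hx | hx
  · rw [val_lasso_of_lt hx]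
  · calc (lasso T L x : ℕ) = T + (x - T) % L := val_lasso_of_le hx
      _ ≡ T + (x - T) [MOD L] := (Nat.mod_modEq _ _).add_left T
      _ = x := Nat.add_sub_cancel' hx

lemma val_lasso_eq_zero (hT : 0 < T) : (lasso T L x : ℕ) = 0 ↔ x = 0 := by
  rcases lt_or_ge x T with hx | hx
  · rw [val_lasso_of_lt hx]
  · have := le_val_lasso (L := L) hx
    omega

lemma lasso_lasso_succ (T L x : ℕ) [NeZero L] :
    lasso T L (lasso T L x + 1) = lasso T L (x + 1) := by
  rcases lt_or_ge x T with hx | hx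
  · rw [val_lasso_of_lt hx]
  · have hle := le_val_lasso (L := L) hx
    ext
    rw [val_lasso_of_le (by omega), val_lasso_of_le hx, val_lasso_of_le (by omega),
      show T + (x - T) % L + 1 - T = (x - T) % L + 1 by omega, Nat.mod_add_mod,
      show x + 1 - T = x - T + 1 by omega]

variable {m : ℕ}

lemma exists_dfa_parikhImage_eq {S : Set (Fin m → ℕ)}
    (hS : ∀ v, (fun a => (lasso T L (v a) : ℕ)) ∈ S ↔ v ∈ S) :
    ∃ B : DFA (Fin m) (Fin m → Fin (T + L)), parikhImage B.accepts = S := by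
  let B : DFA (Fin m) (Fin m → Fin (T + L)) :=
    { step := fun y a => Function.update y a (lasso T L (y a + 1))
      start := fun _ => lasso T L 0
      accept := {y | (fun a => (y a : ℕ)) ∈ S} }
  have eval_eq (w : List (Fin m)) : B.eval w = fun a => lasso T L (parikh w a) := by
    induction w using List.reverseRecOn with
    | nil => rw [parikh_nil]; rfl
    | append_singleton w a ih =>
      rw [DFA.eval_append_singleton, ih]
      funext b
      rcases eq_or_ne b a with rfl | hb
      · simp [B, parikh_append, parikh_cons, parikh_nil, lasso_lasso_succ]
      · simp [B, parikh_append, parikh_cons, parikh_nil, hb]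
  have mem_accepts (w : List (Fin m)) : w ∈ B.accepts ↔ parikh w ∈ S := by
    rw [DFA.mem_accepts, eval_eq]
    exact hS _
  refine ⟨B, Set.ext fun v => ⟨?_, fun hv => ?_⟩⟩
  · rintro ⟨w, hw, rfl⟩
    exact (mem_accepts w).1 hw
  · obtain ⟨w, rfl⟩ := parikh_surjective v
    exact ⟨w, (mem_accepts w).2 hv, rfl⟩

lemma eq_single_of_support_subsingleton {v : Fin m → ℕ} (hv : (Function.support v).Subsingleton)
    {a : Fin m} (ha : v a ≠ 0) : v = Pi.single a (v a) := by
  funext b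
  rcases eq_or_ne b a with rfl | hb
  · rw [Pi.single_eq_same]
  · rw [Pi.single_eq_of_ne hb]
    by_contra h
    exact hb (hv h ha)

lemma exists_dfa_short_or_unary {σ : Type*} [Fintype σ] (A : NFA (Fin m) σ) (hT : 0 < T)
    (hTσ : 4 * Fintype.card σ ^ 2 ≤ T)
    (hL : ∀ a, ∀ d ∈ cyclePeriods fun p q => q ∈ A.step p a, d ∣ L) :
    ∃ B : DFA (Fin m) (Fin m → Fin (T + L)), parikhImage B.accepts =
      {v ∈ parikhImage A.accepts | weight v < T ∨ (Function.support v).Subsingleton} := by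
  refine exists_dfa_parikhImage_eq fun v => ?_
  by_cases hv : ∀ a, v a < T
  · simp only [val_lasso_of_lt (hv _)]
  obtain ⟨a, ha⟩ := not_forall.1 hv
  rw [not_lt] at ha
  have ha' := le_val_lasso (L := L) ha
  set v' : Fin m → ℕ := fun b => lasso T L (v b)
  have hsupp : Function.support v' = Function.support v :=
    Set.ext fun b => not_congr (val_lasso_eq_zero hT)
  have hw : ¬ weight v < T := (ha.trans (le_weight v a)).not_gt
  have hw' : ¬ weight v' < T := (ha'.trans (le_weight v' a)).not_gt
  simp only [Set.mem_ofPred_eq, hw, hw', false_or, hsupp, and_congr_left_iff]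
  intro hunary
  have hv_single := eq_single_of_support_subsingleton hunary (hT.trans_le ha).ne'
  have hv'_single : v' = Pi.single a (v' a) :=
    eq_single_of_support_subsingleton (hsupp ▸ hunary) (hT.trans_le ha').ne'
  have hmod : v' a ≡ v a [MOD L] := val_lasso_modEq T L (v a)
  rw [hv_single, hv'_single]
  exact ⟨single_mem_parikhImage_accepts_of_modEq (hL a) (hTσ.trans ha') (hTσ.trans ha) hmod,
    single_mem_parikhImage_accepts_of_modEq (hL a) (hTσ.trans ha) (hTσ.trans ha') hmod.symm⟩

end Lasso

section Code

lemma exists_dfa_of_finset {α σ : Type*} (M : DFA α σ) (F : Finset σ) (hstart : M.start ∈ F)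
    (hstep : ∀ s ∈ F, ∀ a, M.step s a ∈ F) : ∃ B : DFA α F, B.accepts = M.accepts := by
  let B : DFA α F :=
    { step := fun s a => ⟨M.step s a, hstep s s.2 a⟩
      start := ⟨M.start, hstart⟩
      accept := {s | ↑s ∈ M.accept} }
  have eval_eq (w : List α) : (B.eval w : σ) = M.eval w := by
    induction w using List.reverseRecOn with
    | nil => rfl
    | append_singleton w a ih =>
      rw [DFA.eval_append_singleton, DFA.eval_append_singleton, ← ih]
  refine ⟨B, Set.ext fun w => ?_⟩
  change (B.eval w : σ) ∈ M.accept ↔ M.eval w ∈ M.accept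
  rw [eval_eq]

/-- The states of `codeDFA`: `count a i` is reached by the word `a ^ (i + 1)`, and in `run p r` it
remains to read a word with letter counts `r` before a period of the `p`-th linear set can be
started. -/
inductive CodeState (m K : ℕ) : Type
  | start : CodeState m K
  | dead : CodeState m K
  | count (a : Fin m) (i : Fin K) : CodeState m K
  | run (p : Fin K) (r : Fin m → ℕ) : CodeState m K

open CodeState

variable {m K : ℕ} (base : Fin K → Fin m → ℕ) (period : Fin K → Fin m → Fin m → ℕ)

open Classical in
/-- A deterministic automaton whose Parikh image is the union of the `K` linear sets with offsets
`base p` and periods `period p d`. An input `a ^ (i + 1) * b * w` with `b ≠ a` announces an element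
of the `i`-th linear set; afterwards the first letter `d` of a period announces `period p d`. -/
noncomputable def codeDFA : DFA (Fin m) (CodeState m K) where
  step
    | start, a => if h : 0 < K then count a ⟨0, h⟩ else dead
    | dead, _ => dead
    | count a i, b =>
      if b = a then
        if h : i + 1 < K then count a ⟨i + 1, h⟩ else dead
      else if Pi.single a (i + 1 : ℕ) + Pi.single b 1 ≤ base i then
        run i (base i - (Pi.single a (i + 1 : ℕ) + Pi.single b 1))
      else dead
    | run p r, d =>
      if Pi.single d 1 ≤ r then run p (r - Pi.single d 1)
      else if r = 0 ∧ Pi.single d 1 ≤ period p d then run p (period p d - Pi.single d 1)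
      else dead
  start := start
  accept := Set.range fun p => run p 0

/-- The invariant of `codeDFA`: `Tracks s v` holds if `s` is reached by a word with letter
counts `v`. -/
def CodeState.Tracks : CodeState m K → (Fin m → ℕ) → Prop
  | start, v => v = 0
  | dead, _ => True
  | count a i, v => v = Pi.single a (i + 1 : ℕ)
  | run p r, v => v + r ∈ linearSet (base p) (Set.range (period p))

variable {base period}

lemma tracks_step {s : CodeState m K} {v : Fin m → ℕ} (h : s.Tracks base period v) (a : Fin m) :
    ((codeDFA base period).step s a).Tracks base period (v + Pi.single a 1) := by
  cases s with
  | start =>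
    obtain rfl : v = 0 := h
    simp only [codeDFA]
    split_ifs
    · exact zero_add _
    · trivial
  | dead => trivial
  | count c i =>
    obtain rfl : v = Pi.single c (i + 1 : ℕ) := h
    simp only [codeDFA]
    split_ifs with hac hi hbase
    · subst hac
      exact (Pi.single_add _ _ _).symm
    · trivial
    · change _ ∈ linearSet _ _
      rw [add_tsub_cancel_of_le hbase]
      exact offset_mem_linearSet
    · trivial
  | run p r =>
    change v + r ∈ linearSet (base p) (Set.range (period p)) at h
    simp only [codeDFA]
    split_ifs with hr hperiod
    · change _ ∈ linearSet _ _
      rwa [add_assoc, add_tsub_cancel_of_le hr]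
    · change _ ∈ linearSet _ _
      rw [hperiod.1, add_zero] at h
      rw [add_assoc, add_tsub_cancel_of_le hperiod.2]
      exact add_mem_linearSet h (AddSubmonoid.subset_closure ⟨a, rfl⟩)
    · trivial

lemma tracks_eval (w : List (Fin m)) :
    ((codeDFA base period).eval w).Tracks base period (parikh w) := by
  induction w using List.reverseRecOn with
  | nil => exact parikh_nil
  | append_singleton w a ih =>
    rw [DFA.eval_append_singleton, parikh_append, parikh_cons, parikh_nil, add_zero]
    exact tracks_step ih a

/-- Some word with letter counts `v` leads from `s` to `t`. -/
def Reads {σ : Type*} (M : DFA (Fin m) σ) (s : σ) (v : Fin m → ℕ) (t : σ) : Prop :=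
  ∃ w, parikh w = v ∧ M.evalFrom s w = t

section Reads

variable {σ : Type*} {M : DFA (Fin m) σ} {s t u : σ} {v v' : Fin m → ℕ}

lemma Reads.refl (s : σ) : Reads M s 0 s := ⟨[], parikh_nil, rfl⟩

lemma Reads.step (s : σ) (a : Fin m) : Reads M s (Pi.single a 1) (M.step s a) :=
  ⟨[a], by rw [parikh_cons, parikh_nil, add_zero], DFA.evalFrom_singleton _ _ _⟩

lemma Reads.trans (h : Reads M s v t) (h' : Reads M t v' u) : Reads M s (v + v') u := by
  obtain ⟨w, rfl, rfl⟩ := h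
  obtain ⟨w', rfl, rfl⟩ := h'
  exact ⟨w ++ w', parikh_append w w', DFA.evalFrom_of_append _ _ _ _⟩

lemma mem_parikhImage_accepts_dfa_iff :
    v ∈ parikhImage M.accepts ↔ ∃ t ∈ M.accept, Reads M M.start v t :=
  ⟨fun ⟨w, hw, hv⟩ => ⟨_, hw, w, hv, rfl⟩,
    fun ⟨_, ht, w, hv, hw⟩ => ⟨w, M.mem_accepts.2 (by rwa [DFA.eval, hw]), hv⟩⟩

end Reads

lemma reads_run_remaining (p : Fin K) (r : Fin m → ℕ) :
    Reads (codeDFA base period) (run p r) r (run p 0) := by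
  obtain ⟨w, rfl⟩ := parikh_surjective r
  induction w with
  | nil => rw [parikh_nil]; exact .refl _
  | cons d w ih =>
    have hstep : (codeDFA base period).step (run p (parikh (d :: w))) d = run p (parikh w) := by
      simp only [codeDFA, parikh_cons, le_add_iff_nonneg_right, zero_le, if_true,
        add_tsub_cancel_left]
    have := (hstep ▸ Reads.step _ d).trans ih
    rwa [← parikh_cons] at this

lemma reads_run_zero (hpiv : ∀ p, IsPivoted (period p)) (p : Fin K) {y : Fin m → ℕ}
    (hy : y ∈ AddSubmonoid.closure (Set.range (period p))) :
    Reads (codeDFA base period) (run p 0) y (run p 0) := by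
  induction hy using AddSubmonoid.closure_induction with
  | zero => exact .refl _
  | add _ _ _ _ h h' => exact h.trans h'
  | mem _ hd =>
    obtain ⟨d, rfl⟩ := hd
    rcases hpiv p d with hzero | hd
    · rw [hzero]; exact .refl _
    have hle : Pi.single d 1 ≤ period p d :=
      update_le_iff.2 ⟨Nat.one_le_iff_ne_zero.2 hd, fun _ _ => Nat.zero_le _⟩
    have hstep : (codeDFA base period).step (run p 0) d = run p (period p d - Pi.single d 1) := by
      simp [codeDFA, hle]
    have := (hstep ▸ Reads.step _ d).trans (reads_run_remaining p _)
    rwa [add_tsub_cancel_of_le hle] at this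

lemma reads_start_count (a : Fin m) (i : ℕ) (hi : i < K) :
    Reads (codeDFA base period) start (Pi.single a (i + 1)) (count a ⟨i, hi⟩) := by
  induction i with
  | zero =>
    have hstep : (codeDFA base period).step start a = count a ⟨0, hi⟩ := dif_pos hi
    exact hstep ▸ Reads.step _ a
  | succ i ih =>
    have hstep : (codeDFA base period).step (count a ⟨i, by omega⟩) a = count a ⟨i + 1, hi⟩ := by
      simp [codeDFA, hi]
    rw [Pi.single_add]
    exact (ih (by omega)).trans (hstep ▸ Reads.step _ a)

lemma reads_start_base {p : Fin K} {a b : Fin m} (hab : b ≠ a) (ha : K ≤ base p a)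
    (hb : base p b ≠ 0) : Reads (codeDFA base period) start (base p) (run p 0) := by
  have hle : Pi.single a (p + 1 : ℕ) + Pi.single b 1 ≤ base p := fun c => by
    have := p.2
    rcases eq_or_ne c a with rfl | hca
    · simp [hab.symm]; omega
    rcases eq_or_ne c b with rfl | hcb
    · simp [hab]; omega
    · simp [hca, hcb]
  have hstep : (codeDFA base period).step (count a p) b =
      run p (base p - (Pi.single a (p + 1 : ℕ) + Pi.single b 1)) := by
    simp [codeDFA, hab, hle]
  have := ((reads_start_count a p p.2).trans (hstep ▸ Reads.step _ b)).trans
    (reads_run_remaining p _)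
  rwa [add_tsub_cancel_of_le hle] at this

lemma parikhImage_codeDFA (hpiv : ∀ p, IsPivoted (period p))
    (hcode : ∀ p, ∃ a b, b ≠ a ∧ K ≤ base p a ∧ base p b ≠ 0) :
    parikhImage (codeDFA base period).accepts =
      ⋃ p, linearSet (base p) (Set.range (period p)) := by
  refine Set.Subset.antisymm ?_ (Set.iUnion_subset fun p v hv => ?_)
  · rintro _ ⟨w, ⟨p, hp⟩, rfl⟩
    have : ((codeDFA base period).eval w).Tracks base period (parikh w) := tracks_eval w
    rw [DFA.eval, ← hp] at this
    exact Set.mem_iUnion.2 ⟨p, this⟩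
  · obtain ⟨y, hy, rfl⟩ := mem_linearSet.1 hv
    obtain ⟨a, b, hab, ha, hb⟩ := hcode p
    exact mem_parikhImage_accepts_dfa_iff.2
      ⟨run p 0, ⟨p, rfl⟩, (reads_start_base hab ha hb).trans (reads_run_zero hpiv p hy)⟩

open Classical in
/-- The states of `codeDFA` in which the remaining letter counts are at most `Q`. -/
noncomputable def codeStates (m K Q : ℕ) : Finset (CodeState m K) :=
  {start, dead} ∪ Finset.univ.image (fun x : Fin m × Fin K => count x.1 x.2) ∪
    (Finset.univ ×ˢ Finset.Iic fun _ => Q).image fun x => run x.1 x.2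

lemma card_codeStates_le (m K Q : ℕ) : (codeStates m K Q).card ≤ 2 + m * K + K * (Q + 1) ^ m := by
  classical
  refine (Finset.card_union_le _ _).trans (add_le_add ((Finset.card_union_le _ _).trans
    (add_le_add Finset.card_le_two ?_)) ?_) <;>
  refine Finset.card_image_le.trans_eq ?_ <;> simp [Pi.card_Iic]

lemma codeDFA_step_mem_codeStates {Q : ℕ} (hbase : ∀ p a, base p a ≤ Q)
    (hperiod : ∀ p d a, period p d a ≤ Q) {s : CodeState m K} (hs : s ∈ codeStates m K Q)
    (a : Fin m) : (codeDFA base period).step s a ∈ codeStates m K Q := by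
  have dead_mem : dead ∈ codeStates m K Q := by simp [codeStates]
  have count_mem (c) (i) : count c i ∈ codeStates m K Q := by simp [codeStates]
  have run_mem (p) (r) : run p r ∈ codeStates m K Q ↔ r ≤ fun _ => Q := by simp [codeStates]
  cases s with
  | start =>
    simp only [codeDFA]
    split_ifs <;> simp only [dead_mem, count_mem]
  | dead => exact dead_mem
  | count =>
    simp only [codeDFA]
    split_ifs <;> simp only [dead_mem, count_mem, run_mem]
    exact tsub_le_self.trans (hbase _)
  | run p r =>
    rw [run_mem] at hs
    simp only [codeDFA]
    split_ifs <;> simp only [dead_mem, run_mem]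
    · exact tsub_le_self.trans hs
    · exact tsub_le_self.trans (hperiod p a)

lemma exists_dfa_iUnion_linearSet {Q : ℕ} (hbase : ∀ p a, base p a ≤ Q)
    (hperiod : ∀ p d a, period p d a ≤ Q) (hpiv : ∀ p, IsPivoted (period p))
    (hcode : ∀ p, ∃ a b, b ≠ a ∧ K ≤ base p a ∧ base p b ≠ 0) :
    ∃ B : DFA (Fin m) (codeStates m K Q),
      parikhImage B.accepts = ⋃ p, linearSet (base p) (Set.range (period p)) := by
  obtain ⟨B, hB⟩ := exists_dfa_of_finset (codeDFA base period) (codeStates m K Q)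
    (by simp [codeDFA, codeStates])
    fun s hs a => codeDFA_step_mem_codeStates hbase hperiod hs a
  exact ⟨B, by rw [hB, parikhImage_codeDFA hpiv hcode]⟩

end Code

section Decomposition

/-- Bounds the weight of the offset in `IsSmallPiece`, for `m` letters and `n` states. The summands
come from `exists_linearSet_subset_parikhImage`, `exists_isPivoted` and
`exists_offset_support_nontrivial`. -/
def offsetBound (m n : ℕ) : ℕ := n ^ 2 + (n + 1) ^ m * (((n + 1) ^ m * n) ^ m * n) + 2 * n

/-- Bounds the number of small pieces, for `m` letters and `n` states. -/
def pieceBound (m n : ℕ) : ℕ := (offsetBound m n + 1) ^ m * ((n + 1) ^ m) ^ m * m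

/-- Bounds the entries of the offsets announced by the code, for `m` letters and `n` states. -/
def codeBound (m n : ℕ) : ℕ := offsetBound m n + pieceBound m n * n

lemma le_codeBound (m n : ℕ) : n ≤ codeBound m n := by
  rw [codeBound, offsetBound]
  omega

/-- Vectors with at least two nonzero entries and at least this weight are covered by the shifted
small pieces, and unary vectors are periodic from this weight on. -/
def longBound (m n : ℕ) : ℕ := 4 * n ^ 2 + offsetBound m n + m * (pieceBound m n * n) + 1

variable {m : ℕ} {σ : Type*} [Fintype σ] {A : NFA (Fin m) σ} {c v : Fin m → ℕ}
  {H : Fin m → Fin m → ℕ} {j : Fin m}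

/-- A linear subset of the Parikh image of `A` given by small data, whose elements are not unary,
with a distinguished nonzero period `H j`. -/
structure IsSmallPiece (A : NFA (Fin m) σ) (c : Fin m → ℕ) (H : Fin m → Fin m → ℕ)
    (j : Fin m) : Prop where
  subset : linearSet c (Set.range H) ⊆ parikhImage A.accepts
  weight_offset_le : weight c ≤ offsetBound m (Fintype.card σ)
  nontrivial : (Function.support c).Nontrivial
  weight_period_le (d : Fin m) : weight (H d) ≤ Fintype.card σ
  isPivoted : IsPivoted H
  period_ne_zero : H j ≠ 0

lemma exists_isSmallPiece (hv : v ∈ parikhImage A.accepts)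
    (hsupp : (Function.support v).Nontrivial) {R : ℕ}
    (hlarge : offsetBound m (Fintype.card σ) + m * (R * Fintype.card σ) < weight v) :
    ∃ c H j, IsSmallPiece A c H j ∧ v ∈ linearSet (c + R • H j) (Set.range H) := by
  classical
  obtain ⟨c₀, G, hv₀, hsub₀, hc₀, hG⟩ := exists_linearSet_subset_parikhImage hv
  obtain ⟨c₁, H, hpiv, hH, hc₁, hv₁, hsub₁⟩ := exists_isPivoted hG hv₀
  obtain ⟨c, hc, hvc, hnontriv, hweight⟩ :=
    exists_offset_support_nontrivial (Set.forall_mem_range.2 hH) hv₁ hsupp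
  have hoffset : weight c ≤ offsetBound m (Fintype.card σ) := by
    rw [Fintype.card_fin] at hc₁
    rw [offsetBound]
    omega
  obtain ⟨j, hj, hvj⟩ := exists_offset_add_nsmul (R := R) hH hvc
    (by rw [Fintype.card_fin]; omega)
  exact ⟨c, H, j, ⟨(linearSet_subset hc AddSubmonoid.subset_closure).trans (hsub₁.trans hsub₀),
    hoffset, hnontriv, hH, hpiv, hj⟩, hvj⟩

open Classical in
/-- The triples `(c, H, j)` with `IsSmallPiece A c H j`, in a finite box containing all of them. -/
noncomputable def smallPieces (A : NFA (Fin m) σ) :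
    Finset ((Fin m → ℕ) × (Fin m → Fin m → ℕ) × Fin m) :=
  {p ∈ (Finset.Iic fun _ => offsetBound m (Fintype.card σ)) ×ˢ
    (Finset.Iic fun _ _ => Fintype.card σ) ×ˢ Finset.univ | IsSmallPiece A p.1 p.2.1 p.2.2}

lemma mem_smallPieces : (c, H, j) ∈ smallPieces A ↔ IsSmallPiece A c H j := by
  simp only [smallPieces, Finset.mem_filter, Finset.mem_product, Finset.mem_Iic, Finset.mem_univ,
    and_true, and_iff_right_iff_imp]
  exact fun h => ⟨fun a => (le_weight c a).trans h.weight_offset_le,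
    fun d a => (le_weight (H d) a).trans (h.weight_period_le d)⟩

lemma card_smallPieces_le (A : NFA (Fin m) σ) :
    (smallPieces A).card ≤ pieceBound m (Fintype.card σ) := by
  classical
  refine (Finset.card_filter_le _ _).trans_eq ?_
  simp [pieceBound, Pi.card_Iic, mul_assoc]

lemma IsSmallPiece.exists_code {R : ℕ} (h : IsSmallPiece A c H j) :
    ∃ a b, b ≠ a ∧ R ≤ (c + R • H j) a ∧ (c + R • H j) b ≠ 0 := by
  obtain ⟨b, hb, hbj⟩ := h.nontrivial.exists_ne j
  have hpivot : H j j ≠ 0 := (h.isPivoted j).resolve_left h.period_ne_zero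
  refine ⟨j, b, hbj, ?_, fun h0 => hb (Nat.eq_zero_of_add_eq_zero_right h0)⟩
  calc R ≤ R * H j j := Nat.le_mul_of_pos_right R (Nat.pos_of_ne_zero hpivot)
    _ ≤ c j + R * H j j := Nat.le_add_left _ _

lemma exists_dfa_long_nonunary (A : NFA (Fin m) σ) :
    ∃ (K : ℕ) (B : DFA (Fin m) (codeStates m K (codeBound m (Fintype.card σ)))),
      K ≤ pieceBound m (Fintype.card σ) ∧ parikhImage B.accepts ⊆ parikhImage A.accepts ∧
      ∀ v ∈ parikhImage A.accepts, (Function.support v).Nontrivial →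
        longBound m (Fintype.card σ) ≤ weight v → v ∈ parikhImage B.accepts := by
  set R := pieceBound m (Fintype.card σ) with hR
  let e := (smallPieces A).equivFin
  let c (p) : Fin m → ℕ := (e.symm p).1.1
  let H (p) : Fin m → Fin m → ℕ := (e.symm p).1.2.1
  let j (p) : Fin m := (e.symm p).1.2.2
  have hpiece (p) : IsSmallPiece A (c p) (H p) (j p) := mem_smallPieces.1 (e.symm p).2
  have hperiod (p) (d) (a) : H p d a ≤ Fintype.card σ :=
    (le_weight _ a).trans ((hpiece p).weight_period_le d)
  have hK : (smallPieces A).card ≤ R := card_smallPieces_le A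
  obtain ⟨B, hB⟩ := exists_dfa_iUnion_linearSet (base := fun p => c p + R • H p (j p))
    (period := H) (Q := codeBound m (Fintype.card σ))
    (fun p a => add_le_add ((le_weight _ a).trans (hpiece p).weight_offset_le)
      (Nat.mul_le_mul_left R (hperiod p (j p) a)))
    (fun p d a => (hperiod p d a).trans (le_codeBound m _))
    (fun p => (hpiece p).isPivoted)
    (fun p => by
      obtain ⟨a, b, hab, ha, hb⟩ := (hpiece p).exists_code (R := R)
      exact ⟨a, b, hab, hK.trans ha, hb⟩)
  refine ⟨_, B, hK, ?_, fun v hv hsupp hlong => ?_⟩ <;> rw [hB]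
  · refine Set.iUnion_subset fun p => (linearSet_subset ?_ AddSubmonoid.subset_closure).trans
      (hpiece p).subset
    exact add_mem_linearSet offset_mem_linearSet
      (nsmul_mem (AddSubmonoid.subset_closure (Set.mem_range_self (j p))) R)
  · obtain ⟨c', H', j', hpiece', hv'⟩ := exists_isSmallPiece hv hsupp (R := R)
      (by rw [longBound, ← hR] at hlong; omega)
    refine Set.mem_iUnion.2 ⟨e ⟨(c', H', j'), mem_smallPieces.2 hpiece'⟩, ?_⟩
    simpa only [c, H, j, Equiv.symm_apply_apply] using hv'

end Decomposition

section Main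

variable {m : ℕ} {σ : Type} [Fintype σ]

/-- A common multiple of the cycle periods of all letters. -/
noncomputable def unaryPeriod (A : NFA (Fin m) σ) : ℕ :=
  ∏ a, (cyclePeriods fun p q => q ∈ A.step p a).lcm id

/-- The number of states sufficient for a Parikh equivalent deterministic automaton, for `m` letters
and `n` states: the product of the sizes of the automata of `exists_dfa_short_or_unary` and
`exists_dfa_long_nonunary`. -/
noncomputable def stateBound (m n : ℕ) : ℕ :=
  (longBound m n + landauBound n ^ m) ^ m *
    (2 + m * pieceBound m n + pieceBound m n * (codeBound m n + 1) ^ m)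

lemma unaryPeriod_ne_zero (A : NFA (Fin m) σ) : unaryPeriod A ≠ 0 :=
  Finset.prod_ne_zero_iff.2 fun _ _ => Finset.lcm_ne_zero_iff.2 fun _ => ne_zero_of_mem_cyclePeriods

lemma dvd_unaryPeriod (A : NFA (Fin m) σ) (a : Fin m) {d : ℕ}
    (hd : d ∈ cyclePeriods fun p q => q ∈ A.step p a) : d ∣ unaryPeriod A :=
  (Finset.dvd_lcm (f := id) hd).trans (Finset.dvd_prod_of_mem
    (fun a => (cyclePeriods fun p q => q ∈ A.step p a).lcm id) (Finset.mem_univ a))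

lemma unaryPeriod_le (A : NFA (Fin m) σ) (hσ : 2 ≤ Fintype.card σ) :
    unaryPeriod A ≤ landauBound (Fintype.card σ) ^ m := by
  refine (Finset.prod_le_pow_card _ _ _ fun a _ => lcm_le_landauBound hσ
    (fun _ => ne_zero_of_mem_cyclePeriods) (sum_cyclePeriods_le _)).trans_eq ?_
  rw [Finset.card_univ, Fintype.card_fin]

lemma IsLandauBounded.stateBound (m : ℕ) : IsLandauBounded (stateBound m) := by
  have offset : IsLandauBounded (offsetBound m) :=
    ((id.pow 2).add (((id.add (const 1)).pow m).mul
      (((((id.add (const 1)).pow m).mul id).pow m).mul id))).add ((const 2).mul id)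
  have piece : IsLandauBounded (pieceBound m) :=
    (((offset.add (const 1)).pow m).mul (((id.add (const 1)).pow m).pow m)).mul (const m)
  have long : IsLandauBounded (longBound m) :=
    ((((const 4).mul (id.pow 2)).add offset).add ((const m).mul (piece.mul id))).add (const 1)
  have code : IsLandauBounded (codeBound m) := offset.add (piece.mul id)
  exact ((long.add (landauBound.pow m)).pow m).mul
    (((const 2).add ((const m).mul piece)).add (piece.mul ((code.add (const 1)).pow m)))

lemma exists_dfa_parikhImage_eq_parikhImage (A : NFA (Fin m) σ) (hσ : 2 ≤ Fintype.card σ) :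
    ∃ (σ' : Type) (_ : Fintype σ') (B : DFA (Fin m) σ'),
      Fintype.card σ' ≤ stateBound m (Fintype.card σ) ∧
      parikhImage B.accepts = parikhImage A.accepts := by
  set T := longBound m (Fintype.card σ) with hT
  have : NeZero (unaryPeriod A) := ⟨unaryPeriod_ne_zero A⟩
  obtain ⟨B₁, hB₁⟩ := exists_dfa_short_or_unary (T := T) (L := unaryPeriod A) A
    (by rw [hT, longBound]; omega) (by rw [hT, longBound]; omega) fun a _ => dvd_unaryPeriod A a
  obtain ⟨K, B₂, hK, hsound, hcomplete⟩ := exists_dfa_long_nonunary A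
  refine ⟨_, inferInstance, B₁.union B₂, ?_, ?_⟩
  · rw [Fintype.card_prod, Fintype.card_fun, Fintype.card_fin, Fintype.card_fin, Fintype.card_coe]
    refine Nat.mul_le_mul ?_ ((card_codeStates_le _ _ _).trans ?_)
    · gcongr
      exact unaryPeriod_le A hσ
    · gcongr
  · rw [DFA.accepts_union, parikhImage_add, hB₁]
    refine (Set.union_subset (Set.sep_subset _ _) hsound).antisymm fun v hv => ?_
    by_cases hshort : weight v < T ∨ (Function.support v).Subsingleton
    · exact Or.inl ⟨hv, hshort⟩
    · rw [not_or, not_lt, Set.not_subsingleton_iff] at hshort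
      exact Or.inr (hcomplete v hv hshort.2 hshort.1)

end Main

/-- For every `m ≥ 1` there is a constant `C > 0` such that every
`n`-state NFA (with `n ≥ 2`) over an alphabet of `m` letters admits a Parikh equivalent
DFA with at most `e^{C·√(n·ln n)}` states. -/
theorem nfa_to_parikh_equivalent_dfa (m : ℕ) (hm : 1 ≤ m) :
    ∃ C : ℝ, 0 < C ∧
      ∀ n : ℕ, 2 ≤ n →
      ∀ (σ : Type) [Fintype σ], Fintype.card σ = n →
      ∀ A : NFA (Fin m) σ,
      ∃ (σ' : Type) (_ : Fintype σ') (B : DFA (Fin m) σ'),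
        (Fintype.card σ' : ℝ) ≤ Real.exp (C * Real.sqrt (n * Real.log n)) ∧
        parikhImage B.accepts = parikhImage A.accepts := by
  obtain ⟨C, hC, hbound⟩ := IsLandauBounded.stateBound m
  refine ⟨C + 1, by positivity, ?_⟩
  rintro n hn σ _ rfl A
  obtain ⟨σ', _, B, hcard, hB⟩ := exists_dfa_parikhImage_eq_parikhImage A hn
  refine ⟨σ', inferInstance, B, ?_, hB⟩
  calc (Fintype.card σ' : ℝ) ≤ stateBound m (Fintype.card σ) := Nat.cast_le.2 hcard
    _ ≤ Real.exp (C * landauExponent (Fintype.card σ)) := hbound _ hn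
    _ ≤ Real.exp ((C + 1) * landauExponent (Fintype.card σ)) := by
      gcongr
      · exact landauExponent_nonneg _
      · exact le_add_of_nonneg_right zero_le_one
end
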